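/- arXiv:1502.01147 — 2 statements merged into one kernel-verified Lean document; each statement's English description precedes it below -/
import Mathlib

section
/- For all integers t ≥ 4 and k ≥ 2, there exists a 3-uniform hypergraph H together with two edges e, f of H with |e ∩ f| = 2, such that (1) H admits a k-coloring of its edges with no monochromatic copy of K_t^{(3)}, and (2) in every k-coloring of the edges of H with no monochromatic copy of K_t^{(3)}, the edges e and f receive different colors. -/
/-! A coloring is *good* if it has no monochromatic clique on `t` vertices. The proof assumes that no
negative sender exists and then builds a hypergraph that has good colorings, yet has a monochromatic
clique in every coloring.

*Stars give senders* (`Star.hasSender`). Suppose a hypergraph has a good coloring and a family of edges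
`{a, b, x}`, `x ∈ X`, which never all get the same color in a good coloring, where no edge contains two
elements of `X`. Many copies of it are glued along `a`, `b`, one copy for each embedding of `X` in a
large set `Fin M`. Identifying elements of the copies of `X` when they have the same image in `Fin M`
leaves no good coloring, by the pigeonhole principle. A maximal partial identification that still
has a good coloring must keep some pair `p`, `q` with equal image apart; then `{a, b, p}` and
`{a, b, q}` differ in every good coloring.

*Partite construction* (`Pic`, `Blowup`). In the manner of Nešetřil and Rödl, one starts from disjoint
`t`-cliques above the `t`-subsets of `Fin m` and processes the triples `τ` of `Fin m` one at a time: the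
Hales-Jewett theorem provides copies of the current picture, amalgamated along the vertices above `τ`,
such that in every coloring one copy is monochromatic above `τ`. The edges outside `τ` have a good
coloring. If all edges above `τ` can be added without losing it, the construction continues
(`Blowup.pic`). Otherwise, let adding one further edge `g` destroy all good colorings. Then every
good coloring has, for each color `r`, a clique of color `r` with only `g` missing, and the edges
through two vertices `a`, `b` of `g` and a private vertex of each such clique form a star on which all
colors appear (`Blowup.star`), hence a sender. Without a sender, all triples get processed, and in
every good coloring of the last picture the color of an edge depends only on its projection,
simultaneously on some clique above each `t`-set. For large `m` this contradicts Ramsey's theorem.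

In both gluing constructions (`Amalg`) the part common to the copies contains no clique on four
vertices, so each clique lies within one copy, and good colorings of the copies can be combined.
-/

/-- Coloring `c` of the edge set `E` of a 3-uniform hypergraph has no monochromatic
copy of `K_t^{(3)}`. -/
def NoMonoK3 (k t : ℕ) (E : Finset (Finset ℕ)) (c : Finset ℕ → Fin k) : Prop :=
  ¬ ∃ S : Finset ℕ, S.card = t ∧ ∃ x : Fin k, ∀ e ⊆ S, e.card = 3 → e ∈ E ∧ c e = x

namespace SignalSender

/-! ### Cliques and good colorings -/

/-- `S` spans a complete 3-uniform hypergraph in the edge set `E`. -/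
def Clq {V : Type} (E : Set (Finset V)) (S : Finset V) : Prop :=
  ∀ e ⊆ S, e.card = 3 → e ∈ E

/-- The coloring `c` of the edge set `E` has no monochromatic clique on `t` vertices. The coloring
is a total function; its values off `E` play no role. -/
def Good {V : Type} {k : ℕ} (t : ℕ) (E : Set (Finset V)) (c : Finset V → Fin k) : Prop :=
  ∀ S : Finset V, S.card = t → ∀ x, ¬ ∀ e ⊆ S, e.card = 3 → e ∈ E ∧ c e = x

/-! ### Amalgams of copies of a hypergraph -/

/-- `F` is glued together from the copies of `E` along the embeddings `ι i`. The vertex `u` is private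
to the copy `i` when `own u = some i`, and belongs to the common core when `own u = none`. An edge
with a private vertex lies in the corresponding copy, every copy is induced, and the core contains
no clique on four vertices. -/
structure Amalg {V U I : Type} (E : Set (Finset V)) (F : Set (Finset U)) (ι : I → V ↪ U)
    (own : U → Option I) : Prop where
  edge : ∀ e ∈ F, ∀ u ∈ e, ∀ i, own u = some i → ∃ e0 : Finset V, e = e0.map (ι i)
  ind : ∀ i (e0 : Finset V), e0.map (ι i) ∈ F → e0 ∈ E
  core : ∀ S : Finset U, (∀ u ∈ S, own u = none) → Clq F S → S.card < 4
  own_eq : ∀ i v j, own (ι i v) = some j → j = i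

/-- Every clique of an amalgam with at least four vertices lies inside one of the copies. -/
lemma Amalg.clique {V U I : Type} {E : Set (Finset V)} {F : Set (Finset U)} {ι : I → V ↪ U}
    {own : U → Option I} (h : Amalg E F ι own) {S : Finset U} (hS : Clq F S) (h4 : 4 ≤ S.card) :
    ∃ i, ∃ S0 : Finset V, S = S0.map (ι i) := by
  classical
  obtain ⟨u, huS, hu⟩ : ∃ u ∈ S, own u ≠ none := by
    by_contra! hc
    exact absurd (h.core S hc hS) (by omega)
  obtain ⟨i, hi⟩ := Option.ne_none_iff_exists'.1 hu
  refine ⟨i, S.preimage (ι i) (ι i).injective.injOn, ?_⟩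
  ext v
  simp only [Finset.mem_map, Finset.mem_preimage]
  constructor
  · intro hv
    obtain ⟨e, he1, he2, he3⟩ := Finset.exists_subsuperset_card_eq (s := {u, v}) (t := S) (n := 3)
      (by simp [Finset.insert_subset_iff, huS, hv]) (Finset.card_le_two.trans (by norm_num))
      (by omega)
    obtain ⟨e0, rfl⟩ := h.edge e (hS e he2 he3) u (he1 (by simp)) i hi
    obtain ⟨w, -, hw⟩ := Finset.mem_map.1 (he1 (show v ∈ ({u, v} : Finset U) by simp))
    exact ⟨w, hw ▸ hv, hw⟩
  · rintro ⟨w, hw, rfl⟩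
    exact hw

/-- Good colorings of the copies that agree on the core glue to a good coloring of the amalgam. -/
lemma Amalg.glue {V U I : Type} {E : Set (Finset V)} {F : Set (Finset U)} {ι : I → V ↪ U}
    {own : U → Option I} (h : Amalg E F ι own) {k t : ℕ} (ht : 4 ≤ t)
    (φ : I → Finset V → Fin k) (hφ : ∀ i, Good t E (φ i)) (c0 : Finset U → Fin k)
    (hc0 : ∀ i (e0 : Finset V), e0.map (ι i) ∈ F → (∀ v ∈ e0, own (ι i v) = none) →
      φ i e0 = c0 (e0.map (ι i))) :
    ∃ c : Finset U → Fin k, Good t F c ∧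
      ∀ i (e0 : Finset V), e0.map (ι i) ∈ F → c (e0.map (ι i)) = φ i e0 := by
  classical
  let c : Finset U → Fin k := fun e =>
    if he : ∃ i, ∃ u ∈ e, own u = some i then
      Function.extend (fun e0 : Finset V => e0.map (ι he.choose)) (φ he.choose) c0 e
    else c0 e
  have hc : ∀ i (e0 : Finset V), e0.map (ι i) ∈ F → c (e0.map (ι i)) = φ i e0 := by
    intro i e0 he0
    by_cases he : ∃ j, ∃ u ∈ e0.map (ι i), own u = some j
    · have hi : he.choose = i := by
        obtain ⟨u, hu, hu'⟩ := he.choose_spec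
        obtain ⟨v, -, rfl⟩ := Finset.mem_map.1 hu
        exact h.own_eq i v _ hu'
      simp only [c, dif_pos he]
      rw [hi]
      exact (Finset.map_injective (ι i)).extend_apply _ _ _
    · simp only [c, dif_neg he]
      refine (hc0 i e0 he0 fun v hv => ?_).symm
      by_contra hne
      obtain ⟨j, hj⟩ := Option.ne_none_iff_exists'.1 hne
      exact he ⟨j, _, Finset.mem_map_of_mem _ hv, hj⟩
  refine ⟨c, ?_, hc⟩
  intro S hS x hx
  obtain ⟨i, S0, rfl⟩ := h.clique (fun e he h3 => (hx e he h3).1) (by omega)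
  rw [Finset.card_map] at hS
  refine hφ i S0 hS x fun e he h3 => ?_
  obtain ⟨h1, h2⟩ := hx (e.map (ι i)) (Finset.map_subset_map.2 he) (by simpa using h3)
  exact ⟨h.ind i e h1, by rw [← hc i e h1, h2]⟩

/-- A good coloring restricts to a good coloring along any embedding of hypergraphs. -/
lemma Good.restrict {V U : Type} {E : Set (Finset V)} {F : Set (Finset U)} {k t : ℕ} {ι : V ↪ U}
    {c : Finset U → Fin k} (hc : Good t F c) (h : ∀ e ∈ E, e.map ι ∈ F) :
    Good t E (fun e => c (e.map ι)) := by
  intro S hS x hx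
  refine hc (S.map ι) (by simpa using hS) x fun e he h3 => ?_
  obtain ⟨e0, he0, rfl⟩ := Finset.subset_map_iff.1 he
  obtain ⟨h1, h2⟩ := hx e0 he0 (by simpa using h3)
  exact ⟨h _ h1, h2⟩

/-! ### From a non-constant star to a sender -/

/-- A hypergraph `E` with two vertices `a`, `b` and a set `X` of further vertices such that the edges
`s x = {a, b, x}` with `x ∈ X` never receive all the same color in a good coloring. No edge contains
two elements of `X`. -/
structure Star (k t : ℕ) {V : Type} (E : Set (Finset V)) (a b : V) (X : Set V)
    (s : X → Finset V) : Prop where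
  three : ∀ e ∈ E, e.card = 3
  ne : a ≠ b
  aX : a ∉ X
  bX : b ∉ X
  mem_s : ∀ x v, v ∈ s x ↔ v = a ∨ v = b ∨ v = x
  s_mem : ∀ x, s x ∈ E
  unique : ∀ e ∈ E, ∀ x ∈ e, ∀ y ∈ e, x ∈ X → y ∈ X → x = y
  good : ∃ c : Finset V → Fin k, Good t E c
  nonconst : ∀ c : Finset V → Fin k, Good t E c → ¬ ∃ y, ∀ x, c (s x) = y

/-- A system of color patterns on a finite set `X`, none of them constant, is copied along all
embeddings `i : X ↪ Fin M`, and elements of the copies are identified. Some identification is still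
satisfiable while two elements `p`, `q` with the same image in `Fin M` get distinct values in every
solution. It is found as a maximal satisfiable refinement of the identification by the image in
`Fin M`, which is unsatisfiable by the pigeonhole principle. -/
lemma exists_identification {X : Type} [Finite X] {k : ℕ} (hk : 0 < k) (R : Set (X → Fin k))
    (hR : R.Nonempty) (hconst : ∀ u ∈ R, ¬ ∃ y, ∀ x, u x = y) :
    ∃ (M : ℕ) (r : Setoid ((X ↪ Fin M) × X)) (p q : (X ↪ Fin M) × X),
      (∃ g : (X ↪ Fin M) × X → Fin k, (∀ i, (fun x => g (i, x)) ∈ R) ∧ ∀ a b, r a b → g a = g b) ∧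
      (∀ a b, r a b → a.1 a.2 = b.1 b.2) ∧
      ∀ g : (X ↪ Fin M) × X → Fin k, (∀ i, (fun x => g (i, x)) ∈ R) → (∀ a b, r a b → g a = g b) →
        g p ≠ g q := by
  classical
  have := Fintype.ofFinite X
  let M := k * Fintype.card X
  let P := (X ↪ Fin M) × X
  let θ : P → Fin M := fun p => p.1 p.2
  let Sat : Setoid P → Prop := fun r =>
    ∃ g : P → Fin k, (∀ i, (fun x => g (i, x)) ∈ R) ∧ ∀ a b, r a b → g a = g b
  have : Finite (Setoid P) := Finite.of_injective (fun r : Setoid P => (fun a b => r a b))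
    (fun r r' h => Setoid.ext fun a b => by rw [show r a b = r' a b from congrFun (congrFun h a) b])
  have hbot : Sat ⊥ := by
    obtain ⟨u, hu⟩ := hR
    refine ⟨fun p => u p.2, fun _ => hu, fun a b hab => ?_⟩
    rw [show a = b from hab]
  have hker : ¬ Sat (Setoid.ker θ) := by
    rintro ⟨g, hg, hgθ⟩
    let h : Fin M → Fin k := fun m => if hm : ∃ p, θ p = m then g hm.choose else ⟨0, hk⟩
    have hh : ∀ p, h (θ p) = g p := by
      intro p
      have hm : ∃ q, θ q = θ p := ⟨p, rfl⟩
      simp only [h, dif_pos hm]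
      exact hgθ _ _ hm.choose_spec
    have : Nonempty (Fin k) := ⟨⟨0, hk⟩⟩
    obtain ⟨y, hy⟩ := Fintype.exists_le_card_fiber_of_mul_le_card h (n := Fintype.card X)
      (by simp [M])
    obtain ⟨j⟩ : Nonempty (X ↪ {m // h m = y}) := by
      rw [Function.Embedding.nonempty_iff_card_le, Fintype.card_subtype]
      exact hy
    let i : X ↪ Fin M := j.trans (Function.Embedding.subtype _)
    refine hconst _ (hg i) ⟨y, fun x => ?_⟩
    show g (i, x) = y
    rw [← hh (i, x)]
    exact (j x).2
  obtain ⟨r, ⟨hr1, hr2⟩, hmax⟩ := Set.Finite.exists_maximal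
    (s := {r : Setoid P | Sat r ∧ r ≤ Setoid.ker θ}) (Set.toFinite _) ⟨⊥, hbot, bot_le⟩
  obtain ⟨p, q, hpq, hpq'⟩ : ∃ p q, θ p = θ q ∧ ¬ r p q := by
    by_contra! hc
    exact hker ((le_antisymm hr2 fun {a b} hab => hc a b hab) ▸ hr1)
  refine ⟨M, r, p, q, hr1, fun a b hab => hr2 hab, ?_⟩
  intro g hg hgr hgpq
  -- otherwise `r` could be enlarged by identifying `p` and `q`
  refine hpq' (hmax (y := Setoid.ker g ⊓ Setoid.ker θ) ⟨⟨g, hg, fun a b hab => hab.1⟩, inf_le_right⟩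
    (fun a b hab => ⟨hgr a b hab, hr2 hab⟩) (show (Setoid.ker g ⊓ Setoid.ker θ) p q from ⟨hgpq, hpq⟩))

/-- A finite negative sender: a hypergraph having a good coloring, with two edges that meet in two
vertices and have distinct colors in every good coloring. -/
def HasSender (k t : ℕ) : Prop :=
  ∃ (U : Type) (_ : Finite U) (F : Set (Finset U)) (e f : Finset U) (a b : U),
    (∀ g ∈ F, g.card = 3) ∧ e ∈ F ∧ f ∈ F ∧ e ≠ f ∧ a ≠ b ∧ a ∈ e ∧ a ∈ f ∧ b ∈ e ∧ b ∈ f ∧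
    (∃ c : Finset U → Fin k, Good t F c) ∧ ∀ c : Finset U → Fin k, Good t F c → c e ≠ c f

/-- Copies of a star system, glued along `a`, `b` and an identification of the copies of `X` given by
`exists_identification`, form a sender. -/
lemma Star.hasSender {k t : ℕ} (hk : 0 < k) (ht : 4 ≤ t) {V : Type} [Finite V] {E : Set (Finset V)}
    {a b : V} {X : Set V} {s : X → Finset V} (h : Star k t E a b X s) : HasSender k t := by
  classical
  let R : Set (X → Fin k) := {u | ∃ φ : Finset V → Fin k, Good t E φ ∧ ∀ x, φ (s x) = u x}
  obtain ⟨M, r, p, q, ⟨g, hgR, hgr⟩, hrθ, hpq⟩ := exists_identification hk R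
    (by obtain ⟨c, hc⟩ := h.good; exact ⟨fun x => c (s x), c, hc, fun _ => rfl⟩)
    (by
      rintro u ⟨φ, hφ, hu⟩ ⟨y, hy⟩
      exact h.nonconst φ hφ ⟨y, fun x => by rw [hu, hy]⟩)
  let I := X ↪ Fin M
  let Q := Quotient r
  let U := (Bool ⊕ Q) ⊕ (I × V)
  let cls : I → X → Q := fun i x => Quotient.mk r (i, x)
  have hcls : ∀ i x y, cls i x = cls i y → x = y := fun i x y hxy =>
    i.injective (hrθ _ _ (Quotient.exact hxy))
  let f : I → V → U := fun i v =>
    if v = a then .inl (.inl true) else if v = b then .inl (.inl false) else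
      if hv : v ∈ X then .inl (.inr (cls i ⟨v, hv⟩)) else .inr (i, v)
  have hfa : ∀ i, f i a = .inl (.inl true) := fun i => by simp [f]
  have hfb : ∀ i, f i b = .inl (.inl false) := fun i => by simp [f, h.ne.symm]
  have hfX : ∀ i (x : X), f i x = .inl (.inr (cls i x)) := fun i x => by
    have h1 : (x : V) ≠ a := fun hx => h.aX (hx ▸ x.2)
    have h2 : (x : V) ≠ b := fun hx => h.bX (hx ▸ x.2)
    simp [f, h1, h2]
  have hfo : ∀ i v, v ≠ a → v ≠ b → v ∉ X → f i v = .inr (i, v) := fun i v h1 h2 h3 => by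
    simp [f, h1, h2, h3]
  have hcase : ∀ v, v = a ∨ v = b ∨ (∃ x : X, v = x) ∨ (v ≠ a ∧ v ≠ b ∧ v ∉ X) := by
    intro v
    by_cases h1 : v = a
    · exact .inl h1
    by_cases h2 : v = b
    · exact .inr (.inl h2)
    by_cases h3 : v ∈ X
    · exact .inr (.inr (.inl ⟨⟨v, h3⟩, rfl⟩))
    · exact .inr (.inr (.inr ⟨h1, h2, h3⟩))
  have hf : ∀ i, Function.Injective (f i) := by
    intro i v w hvw
    rcases hcase v with h1 | h1 | ⟨x, h1⟩ | ⟨h1, h2, h3⟩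
    · rw [h1, hfa] at hvw
      rcases hcase w with h4 | h4 | ⟨y, h4⟩ | ⟨h4, h5, h6⟩
      · rw [h1, h4]
      · rw [h4, hfb] at hvw; cases hvw
      · rw [h4, hfX] at hvw; cases hvw
      · rw [hfo i w h4 h5 h6] at hvw; cases hvw
    · rw [h1, hfb] at hvw
      rcases hcase w with h4 | h4 | ⟨y, h4⟩ | ⟨h4, h5, h6⟩
      · rw [h4, hfa] at hvw; cases hvw
      · rw [h1, h4]
      · rw [h4, hfX] at hvw; cases hvw
      · rw [hfo i w h4 h5 h6] at hvw; cases hvw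
    · rw [h1, hfX] at hvw
      rcases hcase w with h4 | h4 | ⟨y, h4⟩ | ⟨h4, h5, h6⟩
      · rw [h4, hfa] at hvw; cases hvw
      · rw [h4, hfb] at hvw; cases hvw
      · rw [h4, hfX] at hvw
        rw [h1, h4, hcls i x y (Sum.inr.inj (Sum.inl.inj hvw))]
      · rw [hfo i w h4 h5 h6] at hvw; cases hvw
    · rw [hfo i v h1 h2 h3] at hvw
      rcases hcase w with h4 | h4 | ⟨y, h4⟩ | ⟨h4, h5, h6⟩
      · rw [h4, hfa] at hvw; cases hvw
      · rw [h4, hfb] at hvw; cases hvw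
      · rw [h4, hfX] at hvw; cases hvw
      · rw [hfo i w h4 h5 h6] at hvw
        exact congrArg Prod.snd (Sum.inr.inj hvw)
  let ι : I → V ↪ U := fun i => ⟨f i, hf i⟩
  have hι : ∀ i v, ι i v = f i v := fun _ _ => rfl
  let own : U → Option I := fun u => match u with
    | .inl _ => none
    | .inr w => some w.1
  -- the core edge belonging to a class of star edges
  let K : Q → Finset U := fun z => {.inl (.inl true), .inl (.inl false), .inl (.inr z)}
  have hsK : ∀ i x, (s x).map (ι i) = K (cls i x) := by
    intro i x
    ext u
    simp only [Finset.mem_map, h.mem_s, K, Finset.mem_insert, Finset.mem_singleton, hι]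
    constructor
    · rintro ⟨v, rfl | rfl | rfl, rfl⟩
      · simp [hfa]
      · simp [hfb]
      · simp [hfX]
    · rintro (rfl | rfl | rfl)
      · exact ⟨a, by simp, hfa i⟩
      · exact ⟨b, by simp, hfb i⟩
      · exact ⟨x, by simp, hfX i x⟩
  let F : Set (Finset U) := {e | ∃ i, ∃ e0 ∈ E, e = e0.map (ι i)}
  -- an edge without private vertices belongs to the star
  have hcore : ∀ i, ∀ e0 ∈ E, (∀ v ∈ e0, own (ι i v) = none) → ∃ x, e0 = s x := by
    intro i e0 he0 hv
    have hv' : ∀ v ∈ e0, v = a ∨ v = b ∨ ∃ x : X, v = x := by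
      intro v hve
      rcases hcase v with h1 | h1 | h1 | ⟨h1, h2, h3⟩
      · exact .inl h1
      · exact .inr (.inl h1)
      · exact .inr (.inr h1)
      · have := hv v hve
        rw [hι, hfo i v h1 h2 h3] at this
        simp [own] at this
    have h3 := h.three e0 he0
    obtain ⟨x, hx⟩ : ∃ x : X, (x : V) ∈ e0 := by
      by_contra! hc
      have : e0 ⊆ {a, b} := by
        intro v hve
        rcases hv' v hve with h1 | h1 | ⟨x, rfl⟩
        · simp [h1]
        · simp [h1]
        · exact absurd hve (hc x)
      have := (Finset.card_le_card this).trans Finset.card_le_two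
      omega
    refine ⟨x, Finset.eq_of_subset_of_card_le (fun v hve => ?_) ?_⟩
    · rw [h.mem_s]
      rcases hv' v hve with h1 | h1 | ⟨y, rfl⟩
      · exact .inl h1
      · exact .inr (.inl h1)
      · exact .inr (.inr (h.unique e0 he0 y hve x hx y.2 x.2))
    · rw [h3, h.three _ (h.s_mem x)]
  have hown : ∀ i v j, own (ι i v) = some j → j = i := by
    intro i v j hj
    rw [hι] at hj
    rcases hcase v with rfl | rfl | ⟨x, rfl⟩ | ⟨h1, h2, h3⟩
    · simp [hfa, own] at hj
    · simp [hfb, own] at hj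
    · simp [hfX, own] at hj
    · rw [hfo i v h1 h2 h3] at hj
      simpa [own] using hj.symm
  have hA : Amalg E F ι own := by
    refine ⟨?_, ?_, ?_, hown⟩
    · rintro e ⟨i, e0, he0, rfl⟩ u hu j hj
      obtain ⟨v, hv, rfl⟩ := Finset.mem_map.1 hu
      obtain rfl := hown _ _ _ hj
      exact ⟨e0, rfl⟩
    · rintro i e0 ⟨j, e1, he1, heq⟩
      by_cases hv : ∀ v ∈ e1, own (ι j v) = none
      · obtain ⟨x, rfl⟩ := hcore j e1 he1 hv
        rw [hsK] at heq
        have hx : (Sum.inl (Sum.inr (cls j x)) : U) ∈ e0.map (ι i) := by simp [heq, K]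
        obtain ⟨v, hv, hvx⟩ := Finset.mem_map.1 hx
        obtain ⟨y, rfl⟩ : ∃ y : X, v = y := by
          rw [hι] at hvx
          rcases hcase v with rfl | rfl | h1 | ⟨h1, h2, h3⟩
          · simp [hfa] at hvx
          · simp [hfb] at hvx
          · exact h1
          · simp [hfo i v h1 h2 h3] at hvx
        rw [hι, hfX] at hvx
        have hxy : cls i y = cls j x := by simpa using hvx
        rw [← hxy, ← hsK] at heq
        rw [Finset.map_injective _ heq]
        exact h.s_mem y
      · push Not at hv
        obtain ⟨v, hv, hne⟩ := hv
        obtain ⟨l, hl⟩ := Option.ne_none_iff_exists'.1 hne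
        have hmem : ι j v ∈ e0.map (ι i) := heq ▸ Finset.mem_map_of_mem _ hv
        obtain ⟨w, -, hw⟩ := Finset.mem_map.1 hmem
        have h1 := hown _ _ _ hl
        have h2 := hown i w l (hw ▸ hl)
        have hij : i = j := h2.symm.trans h1
        subst hij
        rw [Finset.map_injective _ heq]
        exact he1
    · intro S hS hcl
      by_contra! h4
      -- every core edge contains the common image of `a`, which can be avoided
      obtain ⟨e, he, he3⟩ := Finset.exists_subset_card_eq
        (s := S.erase (Sum.inl (Sum.inl true))) (n := 3)
        (by have := Finset.pred_card_le_card_erase (s := S) (a := (Sum.inl (Sum.inl true) : U))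
            omega)
      have heS := he.trans (Finset.erase_subset _ _)
      obtain ⟨i, e0, he0, rfl⟩ := hcl e heS he3
      obtain ⟨x, rfl⟩ := hcore i e0 he0 fun v hv => hS _ (heS (Finset.mem_map_of_mem _ hv))
      rw [hsK] at he
      have : (Sum.inl (Sum.inl true) : U) ∈ S.erase (Sum.inl (Sum.inl true)) := he (by simp [K])
      simp at this
  have hKF : ∀ i x, K (cls i x) ∈ F := fun i x => ⟨i, s x, h.s_mem x, (hsK i x).symm⟩
  have hKinj : Function.Injective K := by
    intro z w hzw
    have : (Sum.inl (Sum.inr z) : U) ∈ K w := by rw [← hzw]; simp [K]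
    simpa [K] using this
  -- the good colorings of the amalgam give solutions of the identified system
  have hsep : ∀ c : Finset U → Fin k, Good t F c →
      c (K (cls p.1 p.2)) ≠ c (K (cls q.1 q.2)) := by
    intro c hc
    refine hpq (fun w => c (K (cls w.1 w.2))) (fun i => ?_) fun v w hvw => ?_
    · exact ⟨fun e => c (e.map (ι i)), hc.restrict fun e he => ⟨i, e, he, rfl⟩,
        fun x => by simp only [hsK]⟩
    · show c (K (Quotient.mk r v)) = c (K (Quotient.mk r w))
      rw [Quotient.sound hvw]
  have hex : ∃ c : Finset U → Fin k, Good t F c := by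
    choose φ hφ hφg using hgR
    let c0 : Finset U → Fin k :=
      Function.extend K (Quotient.lift g fun a b hab => hgr a b hab) fun _ => ⟨0, hk⟩
    obtain ⟨c, hc, -⟩ := hA.glue ht φ hφ c0 fun i e0 he0 hv => by
      obtain ⟨x, rfl⟩ := hcore i e0 (hA.ind i e0 he0) hv
      rw [hφg, hsK]
      exact (hKinj.extend_apply (Quotient.lift g fun a b hab => hgr a b hab) _ (cls i x)).symm
    exact ⟨c, hc⟩
  obtain ⟨c, hc⟩ := hex
  exact ⟨U, inferInstance, F, K (cls p.1 p.2), K (cls q.1 q.2), .inl (.inl true), .inl (.inl false),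
    by rintro _ ⟨i, e0, he0, rfl⟩; simpa using h.three e0 he0, hKF _ _, hKF _ _,
    fun heq => hsep c hc (congrArg c heq), (nomatch ·), by simp [K], by simp [K], by simp [K],
    by simp [K], ⟨c, hc⟩, hsep⟩

/-! ### Ramsey's theorem for hypergraphs -/

/-- Finite Ramsey theorem for `r`-sets and `k` colors, by induction on `r`. The inner induction finds
a set `S` on which the color of an `(r + 1)`-set is determined by one of its elements. -/
lemma ramsey {k : ℕ} : ∀ r n : ℕ, ∃ N : ℕ, ∀ (α : Type) (V : Finset α), N ≤ V.card →
    ∀ c : Finset α → Fin k, ∃ S ⊆ V, S.card = n ∧ ∃ x, ∀ e ⊆ S, e.card = r → c e = x := by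
  classical
  intro r
  induction r with
  | zero =>
    intro n
    refine ⟨n, fun α V hV c => ?_⟩
    obtain ⟨S, hS, hn⟩ := Finset.exists_subset_card_eq hV
    exact ⟨S, hS, hn, c ∅, fun e _ he => by rw [Finset.card_eq_zero.1 he]⟩
  | succ r ih =>
    have inner : ∀ n : ℕ, ∃ N : ℕ, ∀ (α : Type) (V : Finset α), N ≤ V.card →
        ∀ c : Finset α → Fin k, ∃ S ⊆ V, S.card = n ∧ ∃ χ : α → Fin k,
          ∀ e ⊆ S, e.card = r + 1 → ∃ v ∈ e, c e = χ v := by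
      intro n
      induction n with
      | zero =>
        refine ⟨0, fun α V _ c => ⟨∅, by simp, rfl, fun _ => c ∅, fun e he h => ?_⟩⟩
        simp [Finset.subset_empty.1 he] at h
      | succ n ihn =>
        obtain ⟨N', hN'⟩ := ihn
        obtain ⟨N, hN⟩ := ih N'
        refine ⟨N + 1, fun α V hV c => ?_⟩
        obtain ⟨v, hv⟩ : V.Nonempty := Finset.card_pos.1 (by omega)
        obtain ⟨S1, hS1, hc1, x, hx⟩ := hN α (V.erase v)
          (by rw [Finset.card_erase_of_mem hv]; omega) (fun e => c (insert v e))
        obtain ⟨S2, hS2, hc2, χ, hχ⟩ := hN' α S1 hc1.ge c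
        have hvS : v ∉ S2 := fun h => by simpa using hS1 (hS2 h)
        refine ⟨insert v S2, ?_, by rw [Finset.card_insert_of_notMem hvS, hc2],
          Function.update χ v x, fun e he hcard => ?_⟩
        · exact Finset.insert_subset hv ((hS2.trans hS1).trans (Finset.erase_subset _ _))
        · by_cases hve : v ∈ e
          · refine ⟨v, hve, ?_⟩
            have := hx (e.erase v) ((Finset.subset_insert_iff.1 he).trans hS2)
              (by rw [Finset.card_erase_of_mem hve, hcard]; rfl)
            simpa [Finset.insert_erase hve] using this
          · obtain ⟨w, hw, hcw⟩ := hχ e ((Finset.subset_insert_iff_of_notMem hve).1 he) hcard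
            have hwv : w ≠ v := fun h => hve (h ▸ hw)
            exact ⟨w, hw, by rw [hcw, Function.update_of_ne hwv]⟩
    intro n
    obtain ⟨N, hN⟩ := inner (k * n)
    refine ⟨N, fun α V hV c => ?_⟩
    obtain ⟨S, hS, hcS, χ, hχ⟩ := hN α V hV c
    have : Nonempty (Fin k) := ⟨c ∅⟩
    obtain ⟨y, -, hy⟩ := Finset.exists_le_card_fiber_of_mul_le_card_of_maps_to
      (s := S) (t := Finset.univ) (f := χ) (n := n) (fun _ _ => Finset.mem_univ _)
      Finset.univ_nonempty (by simp [hcS])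
    obtain ⟨S', hS', hn⟩ := Finset.exists_subset_card_eq hy
    refine ⟨S', (hS'.trans (Finset.filter_subset _ _)).trans hS, hn, y, fun e he hcard => ?_⟩
    obtain ⟨v, hv, hcv⟩ := hχ e (he.trans (hS'.trans (Finset.filter_subset _ _))) hcard
    rw [hcv]
    exact (Finset.mem_filter.1 (hS' (he hv))).2

/-! ### Pictures -/

/-- A hypergraph `E` with a projection `π` onto `Fin m`, at the stage of the partite construction where
the triples in `A` have been processed: in every coloring, the color of an edge over `A` is determined
by its projection, simultaneously on some clique above each `t`-subset of `Fin m`. Edges not over `A`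
lie in at most one `t`-clique. -/
structure Pic (k t m : ℕ) (A : Set (Finset (Fin m))) {V : Type} (E : Set (Finset V))
    (π : V → Fin m) : Prop where
  three : ∀ e ∈ E, e.card = 3
  inj : ∀ e ∈ E, Set.InjOn π e
  unique : ∀ e ∈ E, e.image π ∉ A → ∀ S S', Clq E S → S.card = t → e ⊆ S →
    Clq E S' → S'.card = t → e ⊆ S' → S = S'
  part : ∀ c : Finset V → Fin k, ∃ χ : Finset (Fin m) → Fin k, ∀ T : Finset (Fin m), T.card = t →
    ∃ S, Clq E S ∧ S.card = t ∧ S.image π = T ∧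
      ∀ e ⊆ S, e.card = 3 → e.image π ∈ A → c e = χ (e.image π)
  good : ∃ c : Finset V → Fin k, Good t E c

/-- The initial picture: disjoint `t`-cliques, one above each `t`-subset of `Fin m`. -/
lemma exists_pic_empty (k t m : ℕ) (hk : 2 ≤ k) (ht : 4 ≤ t) :
    ∃ (V : Type) (_ : Finite V) (E : Set (Finset V)) (π : V → Fin m), Pic k t m ∅ E π := by
  classical
  let V := Finset (Fin m) × Fin m
  let j : Finset (Fin m) → Fin m ↪ V := fun T => ⟨Prod.mk T, Prod.mk_right_injective T⟩
  let E : Set (Finset V) := {e | ∃ T e0 : Finset (Fin m), T.card = t ∧ e0 ⊆ T ∧ e0.card = 3 ∧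
    e = e0.map (j T)}
  have hE : ∀ e ∈ E, ∀ u ∈ e, u.1.card = t ∧ e ⊆ u.1.map (j u.1) := by
    rintro _ ⟨T, e0, hT, he0, -, rfl⟩ u hu
    obtain ⟨w, hw, rfl⟩ := Finset.mem_map.1 hu
    exact ⟨hT, Finset.map_subset_map.2 he0⟩
  have hcl : ∀ S : Finset V, Clq E S → S.card = t → ∀ u ∈ S, u.1.card = t ∧ S = u.1.map (j u.1) := by
    intro S hS hc u hu
    have key : ∀ v ∈ S, u.1.card = t ∧ v ∈ u.1.map (j u.1) := by
      intro v hv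
      obtain ⟨e, he1, he2, he3⟩ := Finset.exists_subsuperset_card_eq (s := {u, v}) (t := S) (n := 3)
        (by simp [Finset.insert_subset_iff, hu, hv]) (Finset.card_le_two.trans (by norm_num))
        (by omega)
      obtain ⟨h1, h2⟩ := hE e (hS e he2 he3) u (he1 (by simp))
      exact ⟨h1, h2 (he1 (by simp))⟩
    have h1 := (key u hu).1
    exact ⟨h1, Finset.eq_of_subset_of_card_le (fun v hv => (key v hv).2) (by simp [h1, hc])⟩
  have hTcl : ∀ T : Finset (Fin m), T.card = t → Clq E (T.map (j T)) := by
    intro T hT e he h3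
    obtain ⟨e0, he0, rfl⟩ := Finset.subset_map_iff.1 he
    exact ⟨T, e0, hT, he0, by simpa using h3, rfl⟩
  refine ⟨V, inferInstance, E, Prod.snd, ?_, ?_, ?_, ?_, ?_⟩
  · rintro _ ⟨T, e0, hT, he0, h3, rfl⟩
    simpa using h3
  · rintro _ ⟨T, e0, hT, he0, h3, rfl⟩ x hx y hy hxy
    obtain ⟨v, -, rfl⟩ := Finset.mem_map.1 hx
    obtain ⟨w, -, rfl⟩ := Finset.mem_map.1 hy
    exact congrArg (j T) hxy
  · rintro _ ⟨T, e0, hT, he0, h3, rfl⟩ - S S' hS hc he hS' hc' he'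
    obtain ⟨v, hv⟩ : e0.Nonempty := Finset.card_pos.1 (by omega)
    have hv' := Finset.mem_map_of_mem (j T) hv
    rw [(hcl S hS hc _ (he hv')).2, (hcl S' hS' hc' _ (he' hv')).2]
  · refine fun c => ⟨fun _ => ⟨0, by omega⟩, fun T hT => ⟨T.map (j T), hTcl T hT, by simpa using hT,
      ?_, fun _ _ _ h => absurd h (Set.notMem_empty _)⟩⟩
    ext v
    simp [j]
  · -- one edge of each clique gets a color that no other edge gets
    have hp : ∀ T : Finset (Fin m), ∃ p : Finset (Fin m), T.card = t → p ⊆ T ∧ p.card = 3 := by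
      intro T
      by_cases hT : T.card = t
      · obtain ⟨p, h1, h2⟩ := Finset.exists_subset_card_eq (s := T) (n := 3) (by omega)
        exact ⟨p, fun _ => ⟨h1, h2⟩⟩
      · exact ⟨∅, fun h => absurd h hT⟩
    choose p hp using hp
    refine ⟨fun e => if ∃ T, e = (p T).map (j T) then ⟨0, by omega⟩ else ⟨1, by omega⟩, ?_⟩
    intro S hS x hx
    obtain ⟨u, hu⟩ : S.Nonempty := Finset.card_pos.1 (by omega)
    obtain ⟨hT, hST⟩ := hcl S (fun e he h3 => (hx e he h3).1) hS u hu
    generalize u.1 = T at hT hST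
    subst hST
    obtain ⟨hpT, hp3⟩ := hp T hT
    have h0 := (hx _ (Finset.map_subset_map.2 hpT) (by simpa using hp3)).2
    beta_reduce at h0
    rw [if_pos ⟨T, rfl⟩] at h0
    obtain ⟨w, hwT, hwp⟩ := Finset.exists_mem_notMem_of_card_lt_card (s := p T) (t := T) (by omega)
    obtain ⟨q, hq1, hq2, hq3⟩ := Finset.exists_subsuperset_card_eq (s := {w}) (t := T) (n := 3)
      (by simpa using hwT) (by simp) (by omega)
    have hwq : w ∈ q := hq1 (by simp)
    have h1 := (hx _ (Finset.map_subset_map.2 hq2) (by simpa using hq3)).2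
    beta_reduce at h1
    rw [if_neg, ← h0] at h1
    · simp at h1
    · rintro ⟨T', hT'⟩
      have hm : j T w ∈ (p T').map (j T') := hT' ▸ Finset.mem_map_of_mem _ hwq
      obtain ⟨w', hwm, heq⟩ := Finset.mem_map.1 hm
      obtain ⟨rfl, rfl⟩ := Prod.mk.inj heq
      exact hwp hwm

/-! ### The partite construction step -/

/-- Copies of a picture, amalgamated along the vertices above a triple `τ`. The set `Z` consists of the
edges above `τ`; a vertex is private to its copy exactly when it does not lie above `τ`. The field
`mono` is the Hales-Jewett property: in every coloring some copy is monochromatic above `τ`. -/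
structure Blowup (k : ℕ) {m : ℕ} {V U I : Type} (E : Set (Finset V)) (π : V → Fin m)
    (τ : Finset (Fin m)) (ι : I → V ↪ U) (own : U → Option I) (π' : U → Fin m)
    (Z : Set (Finset U)) : Prop where
  proj : ∀ i v, π' (ι i v) = π v
  own_core : ∀ i v, π v ∈ τ → own (ι i v) = none
  own_priv : ∀ i v, π v ∉ τ → own (ι i v) = some i
  Z_card : ∀ z ∈ Z, z.card = 3
  Z_proj : ∀ z ∈ Z, z.image π' = τ
  Z_own : ∀ z ∈ Z, ∀ u ∈ z, own u = none
  map_mem : ∀ i, ∀ e ∈ E, e.image π = τ → e.map (ι i) ∈ Z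
  of_map_mem : ∀ i (e : Finset V), e.map (ι i) ∈ Z → e ∈ E
  mono : ∀ c : Finset U → Fin k, ∃ i y, ∀ e ∈ E, e.image π = τ → c (e.map (ι i)) = y

/-- The copies are indexed by the combinatorial lines in a power `N → B` of the set `B` of edges above
`τ`. The vertices above `τ` become functions `N → V`, and the copy of a line `l` repeats a vertex at
the active coordinates of `l`, and follows the edges prescribed by `l` at the others. -/
lemma exists_blowup {k m : ℕ} (hk : 0 < k) {V : Type} [Finite V] (E : Set (Finset V)) (π : V → Fin m)
    (τ : Finset (Fin m)) (hτ : τ.card = 3) (h3 : ∀ e ∈ E, e.card = 3)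
    (hinj : ∀ e ∈ E, Set.InjOn π e) :
    ∃ (U I : Type) (_ : Finite U) (ι : I → V ↪ U) (own : U → Option I) (π' : U → Fin m)
      (Z : Set (Finset U)), Blowup k E π τ ι own π' Z := by
  classical
  let B := {e : Finset V // e ∈ E ∧ e.image π = τ}
  have : Finite (Finset V) := by
    have := Fintype.ofFinite V
    infer_instance
  obtain ⟨N, hN, hHJ⟩ := Combinatorics.Line.exists_mono_in_high_dimension B (Fin k)
  let L := Combinatorics.Line B N
  have : Finite L := Finite.of_injective (fun l : L => l.idxFun) fun l l' h => by
    cases l; cases l'; cases h; rfl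
  obtain ⟨s1⟩ : Nonempty N := by
    obtain ⟨l, -⟩ := hHJ fun _ => ⟨0, hk⟩
    exact ⟨l.proper.choose⟩
  -- the vertex of an edge above a given element of `τ`
  have hvtx : ∀ (e : B) (j : Fin m), ∃ v : V, j ∈ τ → v ∈ e.1 ∧ π v = j := by
    intro e j
    by_cases hj : j ∈ τ
    · rw [← e.2.2] at hj
      obtain ⟨v, hv, hvj⟩ := Finset.mem_image.1 hj
      exact ⟨v, fun _ => ⟨hv, hvj⟩⟩
    · obtain ⟨v, hv⟩ : e.1.Nonempty := Finset.card_pos.1 (by rw [h3 _ e.2.1]; norm_num)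
      exact ⟨v, fun h => absurd h hj⟩
  choose vtx hvtx using hvtx
  have hmemτ : ∀ (e : B) v, v ∈ e.1 → π v ∈ τ := fun e v hv => by
    rw [← e.2.2]; exact Finset.mem_image_of_mem π hv
  have hvtx' : ∀ (e : B) v, v ∈ e.1 → vtx e (π v) = v := fun e v hv =>
    hinj _ e.2.1 (hvtx e _ (hmemτ e v hv)).1 hv (hvtx e _ (hmemτ e v hv)).2
  let U := (N → V) ⊕ (L × V)
  let fc : L → V → N → V := fun l v s => (l.idxFun s).elim v fun e => vtx e (π v)
  let f : L → V → U := fun l v => if π v ∈ τ then .inl (fc l v) else .inr (l, v)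
  have hf1 : ∀ l v, π v ∈ τ → f l v = .inl (fc l v) := fun l v h => if_pos h
  have hf2 : ∀ l v, π v ∉ τ → f l v = .inr (l, v) := fun l v h => if_neg h
  have hact : ∀ l : L, ∃ s, ∀ v, fc l v s = v := by
    intro l
    obtain ⟨s, hs⟩ := l.proper
    exact ⟨s, fun v => by simp [fc, hs]⟩
  have hf : ∀ l, Function.Injective (f l) := by
    intro l v w hvw
    by_cases hv : π v ∈ τ <;> by_cases hw : π w ∈ τ
    · rw [hf1 l v hv, hf1 l w hw] at hvw
      obtain ⟨s, hs⟩ := hact l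
      rw [← hs v, ← hs w, Sum.inl.inj hvw]
    · rw [hf1 l v hv, hf2 l w hw] at hvw
      cases hvw
    · rw [hf2 l v hv, hf1 l w hw] at hvw
      cases hvw
    · rw [hf2 l v hv, hf2 l w hw] at hvw
      exact congrArg Prod.snd (Sum.inr.inj hvw)
  let ι : L → V ↪ U := fun l => ⟨f l, hf l⟩
  have hι : ∀ l v, ι l v = f l v := fun _ _ => rfl
  let own : U → Option L := fun u => match u with
    | .inl _ => none
    | .inr w => some w.1
  let π' : U → Fin m := fun u => match u with
    | .inl g => π (g s1)
    | .inr w => π w.2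
  let zv : (N → B) → Fin m → U := fun x j => .inl fun s => vtx (x s) j
  let z : (N → B) → Finset U := fun x => τ.image (zv x)
  have hzv : ∀ x, ∀ j ∈ τ, π' (zv x j) = j := fun x j hj => (hvtx (x s1) j hj).2
  have hzc : ∀ x, (z x).card = 3 := by
    intro x
    rw [← hτ]
    refine Finset.card_image_of_injOn fun i hi j hj hij => ?_
    rw [← hzv x i hi, ← hzv x j hj, hij]
  have hmap : ∀ (l : L) (e : B), e.1.map (ι l) = z (l e) := by
    intro l e
    have hfz : ∀ v ∈ e.1, ι l v = zv (l e) (π v) := by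
      intro v hv
      rw [hι, hf1 l v (hmemτ e v hv)]
      refine congrArg Sum.inl (funext fun s => ?_)
      show (l.idxFun s).elim v (fun e => vtx e (π v)) = vtx ((l.idxFun s).getD e) (π v)
      cases l.idxFun s with
      | none => exact (hvtx' e v hv).symm
      | some e' => rfl
    refine Finset.eq_of_subset_of_card_le (fun u hu => ?_) (by rw [hzc, Finset.card_map, h3 _ e.2.1])
    obtain ⟨v, hv, rfl⟩ := Finset.mem_map.1 hu
    rw [hfz v hv]
    exact Finset.mem_image_of_mem _ (hmemτ e v hv)
  refine ⟨U, L, inferInstance, ι, own, π', Set.range z, ?_, ?_, ?_, ?_, ?_, ?_, ?_, ?_, ?_⟩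
  · intro l v
    rw [hι]
    by_cases hv : π v ∈ τ
    · rw [hf1 l v hv]
      show π ((l.idxFun s1).elim v fun e => vtx e (π v)) = π v
      cases l.idxFun s1 with
      | none => rfl
      | some e => exact (hvtx e _ hv).2
    · rw [hf2 l v hv]
  · intro l v hv
    rw [hι, hf1 l v hv]
  · intro l v hv
    rw [hι, hf2 l v hv]
  · rintro _ ⟨x, rfl⟩
    exact hzc x
  · rintro _ ⟨x, rfl⟩
    ext j
    simp only [z, Finset.mem_image, exists_exists_and_eq_and]
    constructor
    · rintro ⟨i, hi, rfl⟩
      rwa [hzv x i hi]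
    · exact fun hj => ⟨j, hj, hzv x j hj⟩
  · rintro _ ⟨x, rfl⟩ u hu
    obtain ⟨j, -, rfl⟩ := Finset.mem_image.1 hu
    rfl
  · exact fun l e he hτe => ⟨l ⟨e, he, hτe⟩, (hmap l ⟨e, he, hτe⟩).symm⟩
  · rintro l e ⟨x, hx⟩
    obtain ⟨s, hs⟩ := hact l
    -- at an active coordinate the copy of `e` shows `e` itself
    have : e = (x s).1 := by
      refine Finset.eq_of_subset_of_card_le (fun v hv => ?_) ?_
      · have hm : ι l v ∈ z x := hx ▸ Finset.mem_map_of_mem _ hv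
        obtain ⟨j, hj, hjv⟩ := Finset.mem_image.1 hm
        rw [hι] at hjv
        by_cases hv : π v ∈ τ
        · rw [hf1 l v hv] at hjv
          rw [← hs v, ← Sum.inl.inj hjv]
          exact (hvtx (x s) j hj).1
        · rw [hf2 l v hv] at hjv
          cases hjv
      · rw [h3 _ (x s).2.1, ← hzc x, hx, Finset.card_map]
    rw [this]
    exact (x s).2.1
  · intro c
    obtain ⟨l, y, hy⟩ := hHJ fun x => c (z x)
    exact ⟨l, y, fun e he hτe => by rw [hmap l ⟨e, he, hτe⟩]; exact hy _⟩

/-- The edges of all copies not lying above `τ`, together with a set `Y` of edges above `τ`. -/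
def fam {m : ℕ} {V U I : Type} (E : Set (Finset V)) (π : V → Fin m) (τ : Finset (Fin m))
    (ι : I → V ↪ U) (Y : Set (Finset U)) : Set (Finset U) :=
  {e | ∃ i, ∃ e0 ∈ E, e0.image π ≠ τ ∧ e = e0.map (ι i)} ∪ Y

/-- The projection is injective on cliques. -/
lemma injOn_of_clq {m : ℕ} {V : Type} {E : Set (Finset V)} {π : V → Fin m}
    (hinj : ∀ e ∈ E, Set.InjOn π e) {S : Finset V} (hS : Clq E S) (h3 : 3 ≤ S.card) :
    Set.InjOn π S := by
  classical
  intro u hu v hv huv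
  obtain ⟨e, he1, he2, he3⟩ := Finset.exists_subsuperset_card_eq (s := {u, v}) (t := S) (n := 3)
    (by rw [Finset.insert_subset_iff]; exact ⟨hu, by simpa using hv⟩)
    (Finset.card_le_two.trans (by norm_num)) h3
  exact hinj e (hS e he2 he3) (he1 (by simp)) (he1 (by simp)) huv

section Step

variable {k m : ℕ} {V U I : Type} {E : Set (Finset V)} {π : V → Fin m}
  {τ : Finset (Fin m)} {ι : I → V ↪ U} {own : U → Option I} {π' : U → Fin m} {Z : Set (Finset U)}

lemma Blowup.own_eq (hB : Blowup k E π τ ι own π' Z) (i : I) (v : V) (j : I)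
    (h : own (ι i v) = some j) : j = i := by
  by_cases hv : π v ∈ τ
  · rw [hB.own_core i v hv] at h
    cases h
  · rw [hB.own_priv i v hv] at h
    exact (Option.some.inj h).symm

lemma Blowup.image (hB : Blowup k E π τ ι own π' Z) (i : I) (e : Finset V) :
    (e.map (ι i)).image π' = e.image π := by
  ext j
  simp [hB.proj]

lemma exists_notMem_of_image_ne (hτ : τ.card = 3) (h3 : ∀ e ∈ E, e.card = 3)
    (hinj : ∀ e ∈ E, Set.InjOn π e) {e : Finset V} (he : e ∈ E) (hne : e.image π ≠ τ) :
    ∃ v ∈ e, π v ∉ τ := by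
  by_contra! hc
  refine hne (Finset.eq_of_subset_of_card_le (Finset.image_subset_iff.2 hc) ?_)
  rw [Finset.card_image_of_injOn (hinj e he), h3 e he, hτ]

lemma Blowup.fam_inj (hB : Blowup k E π τ ι own π' Z) (hτ : τ.card = 3)
    (hinj : ∀ e ∈ E, Set.InjOn π e) {Z' : Set (Finset U)} (hZ : Z' ⊆ Z) :
    ∀ e ∈ fam E π τ ι Z', Set.InjOn π' e := by
  rintro e (⟨i, e0, he0, -, rfl⟩ | he)
  · intro u hu v hv huv
    obtain ⟨u, hu', rfl⟩ := Finset.mem_map.1 hu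
    obtain ⟨v, hv', rfl⟩ := Finset.mem_map.1 hv
    rw [hB.proj, hB.proj] at huv
    rw [hinj e0 he0 hu' hv' huv]
  · rw [← Finset.card_image_iff, hB.Z_proj e (hZ he), hB.Z_card e (hZ he), hτ]

lemma Blowup.fam_three (hB : Blowup k E π τ ι own π' Z) (h3 : ∀ e ∈ E, e.card = 3)
    {Z' : Set (Finset U)} (hZ : Z' ⊆ Z) : ∀ e ∈ fam E π τ ι Z', e.card = 3 := by
  rintro e (⟨i, e0, he0, -, rfl⟩ | he)
  · simpa using h3 e0 he0
  · exact hB.Z_card e (hZ he)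

lemma Blowup.amalg (hB : Blowup k E π τ ι own π' Z) (hτ : τ.card = 3) (h3 : ∀ e ∈ E, e.card = 3)
    (hinj : ∀ e ∈ E, Set.InjOn π e) {Z' : Set (Finset U)} (hZ : Z' ⊆ Z) :
    Amalg E (fam E π τ ι Z') ι own := by
  classical
  refine ⟨?_, ?_, ?_, hB.own_eq⟩
  · rintro e (⟨j, e0, he0, -, rfl⟩ | he) u hu i hi
    · obtain ⟨v, -, rfl⟩ := Finset.mem_map.1 hu
      obtain rfl := hB.own_eq _ _ _ hi
      exact ⟨e0, rfl⟩
    · rw [hB.Z_own e (hZ he) u hu] at hi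
      cases hi
  · rintro i e0 (⟨j, e1, he1, hne, heq⟩ | he)
    · obtain ⟨v, hv, hvτ⟩ := exists_notMem_of_image_ne hτ h3 hinj he1 hne
      have hm : ι j v ∈ e0.map (ι i) := heq ▸ Finset.mem_map_of_mem _ hv
      obtain ⟨w, -, hw⟩ := Finset.mem_map.1 hm
      obtain rfl := hB.own_eq i w j (by rw [hw, hB.own_priv j v hvτ])
      rw [Finset.map_injective _ heq]
      exact he1
    · exact hB.of_map_mem i e0 (hZ he)
  · intro S hS hcl
    by_contra! h4
    have hτS : ∀ e ⊆ S, e.card = 3 → e.image π' = τ := by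
      intro e he he3
      rcases hcl e he he3 with ⟨i, e0, he0, hne, rfl⟩ | hz
      · obtain ⟨v, hv, hvτ⟩ := exists_notMem_of_image_ne hτ h3 hinj he0 hne
        have := hS _ (he (Finset.mem_map_of_mem _ hv))
        rw [hB.own_priv i v hvτ] at this
        cases this
      · exact hB.Z_proj e (hZ hz)
    have hsub : S.image π' ⊆ τ := by
      intro j hj
      obtain ⟨u, hu, rfl⟩ := Finset.mem_image.1 hj
      obtain ⟨e, he1, he2, he3⟩ := Finset.exists_subsuperset_card_eq (s := {u}) (t := S) (n := 3)
        (by simpa using hu) (by simp) (by omega)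
      rw [← hτS e he2 he3]
      exact Finset.mem_image_of_mem _ (he1 (by simp))
    have := Finset.card_le_card hsub
    rw [Finset.card_image_of_injOn (injOn_of_clq (hB.fam_inj hτ hinj hZ) hcl (by omega)), hτ] at this
    omega

/-- If all edges above `τ` can be added without losing the good coloring, the result is the next
picture. -/
lemma Blowup.pic {t : ℕ} {A : Set (Finset (Fin m))} (hB : Blowup k E π τ ι own π' Z) (ht : 4 ≤ t)
    (hτ : τ.card = 3) (hP : Pic k t m A E π)
    (hgood : ∃ c : Finset U → Fin k, Good t (fam E π τ ι Z) c) :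
    Pic k t m (insert τ A) (fam E π τ ι Z) π' := by
  classical
  have hA := hB.amalg hτ hP.three hP.inj subset_rfl
  have hmap : ∀ i, ∀ e ∈ E, e.map (ι i) ∈ fam E π τ ι Z := by
    intro i e he
    by_cases h : e.image π = τ
    · exact .inr (hB.map_mem i e he h)
    · exact .inl ⟨i, e, he, h, rfl⟩
  refine ⟨hB.fam_three hP.three subset_rfl, hB.fam_inj hτ hP.inj subset_rfl, ?_, ?_, hgood⟩
  · rintro e (⟨i, e0, he0, hne, rfl⟩ | hz) hnA S S' hS hSt heS hS' hSt' heT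
    · rw [hB.image] at hnA
      -- a private vertex of the edge determines the copy
      obtain ⟨v, hv, hvτ⟩ := exists_notMem_of_image_ne hτ hP.three hP.inj he0 hne
      have key : ∀ S, Clq (fam E π τ ι Z) S → S.card = t → e0.map (ι i) ⊆ S →
          ∃ S0, S = S0.map (ι i) ∧ Clq E S0 ∧ S0.card = t ∧ e0 ⊆ S0 := by
        intro S hS hSt heS
        obtain ⟨j, S0, rfl⟩ := hA.clique hS (by omega)
        obtain ⟨w, -, hw⟩ := Finset.mem_map.1 (heS (Finset.mem_map_of_mem _ hv))
        obtain rfl := hB.own_eq j w i (by rw [hw, hB.own_priv i v hvτ])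
        refine ⟨S0, rfl, fun e he h3 => ?_, by simpa using hSt, Finset.map_subset_map.1 heS⟩
        exact hA.ind _ e (hS _ (Finset.map_subset_map.2 he) (by simpa using h3))
      obtain ⟨S0, rfl, h1, h2, h3⟩ := key S hS hSt heS
      obtain ⟨S0', rfl, h1', h2', h3'⟩ := key S' hS' hSt' heT
      rw [hP.unique e0 he0 (fun h => hnA (.inr h)) S0 S0' h1 h2 h3 h1' h2' h3']
    · exact absurd (.inl (hB.Z_proj e hz)) hnA
  · intro c
    obtain ⟨i, y, hy⟩ := hB.mono c
    obtain ⟨χ, hχ⟩ := hP.part fun e => c (e.map (ι i))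
    refine ⟨Function.update χ τ y, fun T hT => ?_⟩
    obtain ⟨S, hS, hSt, hST, hc⟩ := hχ T hT
    refine ⟨S.map (ι i), fun e he h3 => ?_, by simpa using hSt, by rw [hB.image, hST], ?_⟩
    · obtain ⟨e0, he0, rfl⟩ := Finset.subset_map_iff.1 he
      exact hmap i e0 (hS e0 he0 (by simpa using h3))
    · intro e he h3 heA
      obtain ⟨e0, he0, rfl⟩ := Finset.subset_map_iff.1 he
      rw [Finset.card_map] at h3
      rw [hB.image] at heA ⊢
      by_cases h : e0.image π = τ
      · rw [h, Function.update_self, hy e0 (hS e0 he0 h3) h]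
      · rw [Function.update_of_ne h]
        exact hc e0 he0 h3 (heA.resolve_left h)

/-- If adding one more edge `g` above `τ` destroys all good colorings, then before adding it every good
coloring contains, for each color, a clique in which only `g` is missing. Each such clique lies in
one copy and is determined by that copy. Choosing one private vertex from it gives a star through
two vertices of `g` on which all colors appear. -/
lemma Blowup.star {t : ℕ} {A : Set (Finset (Fin m))} (hB : Blowup k E π τ ι own π' Z) (hk : 2 ≤ k)
    (ht : 4 ≤ t) (hτ : τ.card = 3) (hτA : τ ∉ A) (hP : Pic k t m A E π) {Z' : Set (Finset U)}
    (hZ : Z' ⊆ Z) {g : Finset U} (hg : g ∈ Z)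
    (hgood : ∃ c : Finset U → Fin k, Good t (fam E π τ ι Z') c)
    (hbad : ¬ ∃ c : Finset U → Fin k, Good t (fam E π τ ι (insert g Z')) c) :
    ∃ (a b : U) (X : Set U) (s : X → Finset U), Star k t (fam E π τ ι Z') a b X s := by
  classical
  have hA := hB.amalg hτ hP.three hP.inj (Set.insert_subset hg hZ)
  obtain ⟨a, b, ha, hb, hab⟩ : ∃ a b, a ∈ g ∧ b ∈ g ∧ a ≠ b := by
    obtain ⟨a, ha, b, hb, hab⟩ := Finset.one_lt_card.1 (by rw [hB.Z_card g hg]; norm_num : 1 < g.card)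
    exact ⟨a, b, ha, hb, hab⟩
  let Cond : I → Prop := fun i => ∃ S, Clq E S ∧ S.card = t ∧ g ⊆ S.map (ι i)
  have hw : ∀ i, Cond i → ∃ w, own (ι i w) = some i ∧ {a, b, ι i w} ∈ fam E π τ ι Z' ∧
      ∀ S, Clq E S → S.card = t → g ⊆ S.map (ι i) → w ∈ S := by
    rintro i ⟨S, hS, hSt, hgS⟩
    obtain ⟨e0, he0, rfl⟩ := Finset.subset_map_iff.1 hgS
    have he0E := hB.of_map_mem i e0 hg
    have he0τ : e0.image π = τ := by rw [← hB.image i, hB.Z_proj _ hg]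
    have he03 := hP.three e0 he0E
    obtain ⟨w, hwS, hwe⟩ := Finset.exists_mem_notMem_of_card_lt_card (s := e0) (t := S) (by omega)
    have hwτ : π w ∉ τ := by
      intro h
      rw [← he0τ] at h
      obtain ⟨v, hv, hvw⟩ := Finset.mem_image.1 h
      exact hwe (injOn_of_clq hP.inj hS (by omega) (he0 hv) hwS hvw ▸ hv)
    obtain ⟨a, ha', rfl⟩ := Finset.mem_map.1 ha
    obtain ⟨b, hb', rfl⟩ := Finset.mem_map.1 hb
    refine ⟨w, hB.own_priv i w hwτ, .inl ⟨i, {a, b, w}, hS _ ?_ ?_, ?_, ?_⟩, ?_⟩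
    · simp [Finset.insert_subset_iff, he0 ha', he0 hb', hwS]
    · rw [Finset.card_eq_three]
      exact ⟨a, b, w, fun h => hab (h ▸ rfl), fun h => hwe (h ▸ ha'), fun h => hwe (h ▸ hb'), rfl⟩
    · intro h
      refine hwτ (h ▸ Finset.mem_image_of_mem π (by simp))
    · simp
    · intro S' hS' hSt' hgS'
      rwa [hP.unique e0 he0E (he0τ ▸ hτA) S' S hS' hSt' (Finset.map_subset_map.1 hgS') hS hSt he0]
  choose w hwown hwmem hwuniq using hw
  have hown : ∀ u, u ∈ g → own u = none := hB.Z_own g hg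
  let X : Set U := {u | ∃ i, ∃ hi : Cond i, u = ι i (w i hi)}
  refine ⟨a, b, X, fun x => {a, b, x.1}, hB.fam_three hP.three hZ, hab, ?_, ?_, ?_, ?_, ?_, hgood, ?_⟩
  · rintro ⟨i, hi, rfl⟩
    simpa [hwown i hi] using hown _ ha
  · rintro ⟨i, hi, rfl⟩
    simpa [hwown i hi] using hown _ hb
  · intro x v
    simp
  · rintro ⟨_, i, hi, rfl⟩
    exact hwmem i hi
  · rintro e he x hx y hy ⟨i, hi, rfl⟩ ⟨j, hj, rfl⟩
    -- both vertices are private, and an edge lies in only one copy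
    rcases he with ⟨l, e0, he0, -, rfl⟩ | hz
    · obtain ⟨v, -, hv⟩ := Finset.mem_map.1 hx
      obtain ⟨v', -, hv'⟩ := Finset.mem_map.1 hy
      have hil := hB.own_eq l v i (hv ▸ hwown i hi)
      have hjl := hB.own_eq l v' j (hv' ▸ hwown j hj)
      subst hil hjl
      rfl
    · have := hB.Z_own e (hZ hz) _ hx
      rw [hwown i hi] at this
      cases this
  · rintro c hc ⟨y, hy⟩
    obtain ⟨r, hr⟩ : ∃ r : Fin k, r ≠ y := by
      have : Nontrivial (Fin k) := Fin.nontrivial_iff_two_le.2 hk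
      exact exists_ne y
    -- recoloring `g` with a color `r` missing from the star must create a clique of color `r`
    refine hbad ⟨Function.update c g r, fun S hSt x hx => ?_⟩
    have hgS : g ⊆ S := by
      by_contra hgS
      refine hc S hSt x fun e he h3 => ?_
      have heg : e ≠ g := fun h => hgS (h ▸ he)
      obtain ⟨h1, h2⟩ := hx e he h3
      rw [Function.update_of_ne heg] at h2
      refine ⟨?_, h2⟩
      rcases h1 with h1 | rfl | h1
      · exact .inl h1
      · exact absurd rfl heg
      · exact .inr h1
    have hxr : r = x := by
      have := (hx g hgS (hB.Z_card g hg)).2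
      rwa [Function.update_self] at this
    obtain ⟨i, S0, rfl⟩ := hA.clique (fun e he h3 => (hx e he h3).1) (by omega)
    have hS0 : Clq E S0 := fun e he h3 =>
      hA.ind i e (hx _ (Finset.map_subset_map.2 he) (by simpa using h3)).1
    rw [Finset.card_map] at hSt
    have hi : Cond i := ⟨S0, hS0, hSt, hgS⟩
    have hwS := hwuniq i hi S0 hS0 hSt hgS
    have h3 := hB.fam_three hP.three hZ _ (hwmem i hi)
    have h1 := (hx {a, b, ι i (w i hi)} (by
      rw [Finset.insert_subset_iff, Finset.insert_subset_iff, Finset.singleton_subset_iff]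
      exact ⟨hgS ha, hgS hb, Finset.mem_map_of_mem _ hwS⟩) h3).2
    rw [Function.update_of_ne] at h1
    · have h2 := hy ⟨ι i (w i hi), i, hi, rfl⟩
      exact hr (hxr.trans (h1.symm.trans h2))
    · intro h
      have := hown (ι i (w i hi)) (h ▸ by simp)
      rw [hwown i hi] at this
      cases this

end Step

/-- One step of the partite construction: it succeeds unless there is a sender. -/
lemma Pic.step {k t m : ℕ} (hk : 2 ≤ k) (ht : 4 ≤ t) {A : Set (Finset (Fin m))}
    {τ : Finset (Fin m)} (hτ : τ.card = 3) (hτA : τ ∉ A) {V : Type} [Finite V]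
    {E : Set (Finset V)} {π : V → Fin m} (hP : Pic k t m A E π) (hno : ¬ HasSender k t) :
    ∃ (U : Type) (_ : Finite U) (F : Set (Finset U)) (π' : U → Fin m),
      Pic k t m (insert τ A) F π' := by
  classical
  obtain ⟨U, I, hU, ι, own, π', Z, hB⟩ :=
    exists_blowup (by omega : 0 < k) E π τ hτ hP.three hP.inj
  have : Finite (Finset U) := by
    have := Fintype.ofFinite U
    infer_instance
  have h0 : ∃ c : Finset U → Fin k, Good t (fam E π τ ι ∅) c := by
    obtain ⟨φ, hφ⟩ := hP.good
    obtain ⟨c, hc, -⟩ := (hB.amalg hτ hP.three hP.inj (Set.empty_subset Z)).glue ht (fun _ => φ)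
      (fun _ => hφ) (fun _ => ⟨0, by omega⟩) fun i e0 he0 hv => by
        rcases he0 with ⟨j, e1, he1, hne, heq⟩ | h
        · obtain ⟨v, hv1, hvτ⟩ := exists_notMem_of_image_ne hτ hP.three hP.inj he1 hne
          have hm : ι j v ∈ e0.map (ι i) := heq ▸ Finset.mem_map_of_mem _ hv1
          obtain ⟨v', hv', hvv⟩ := Finset.mem_map.1 hm
          have := hv v' hv'
          rw [hvv, hB.own_priv j v hvτ] at this
          cases this
        · exact absurd h (Set.notMem_empty _)
    exact ⟨c, hc⟩
  obtain ⟨Z', ⟨hZ, hgood⟩, hmax⟩ := Set.Finite.exists_maximal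
    (s := {Z' : Set (Finset U) | Z' ⊆ Z ∧ ∃ c : Finset U → Fin k, Good t (fam E π τ ι Z') c})
    (Set.toFinite _) ⟨∅, Set.empty_subset _, h0⟩
  by_cases hZZ : Z ⊆ Z'
  · obtain rfl := Set.Subset.antisymm hZ hZZ
    exact ⟨U, hU, _, π', hB.pic ht hτ hP hgood⟩
  · obtain ⟨g, hg, hg'⟩ := Set.not_subset.1 hZZ
    obtain ⟨a, b, X, s, hS⟩ := hB.star hk ht hτ hτA hP hZ hg hgood fun hbad =>
      hg' (hmax ⟨Set.insert_subset hg hZ, hbad⟩ (Set.subset_insert _ _) (Set.mem_insert _ _))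
    exact absurd (hS.hasSender (by omega) ht) hno

/-! ### Existence of a sender -/

/-- Without a sender the partite construction would run through all triples, and by Ramsey's theorem
the final picture has no good coloring. -/
lemma hasSender {k t : ℕ} (hk : 2 ≤ k) (ht : 4 ≤ t) : HasSender k t := by
  classical
  by_contra hno
  obtain ⟨m, hm⟩ := ramsey (k := k) 3 t
  have hall : ∀ A : Finset (Finset (Fin m)), (∀ τ ∈ A, τ.card = 3) →
      ∃ (V : Type) (_ : Finite V) (E : Set (Finset V)) (π : V → Fin m),
        Pic k t m (A : Set (Finset (Fin m))) E π := by
    intro A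
    induction A using Finset.induction_on with
    | empty =>
      intro _
      simpa using exists_pic_empty k t m hk ht
    | insert τ A hτA ih =>
      intro h
      obtain ⟨V, hV, E, π, hP⟩ := ih fun σ hσ => h σ (Finset.mem_insert_of_mem hσ)
      rw [Finset.coe_insert]
      exact hP.step hk ht (h τ (Finset.mem_insert_self _ _)) (by simpa using hτA) hno
  obtain ⟨V, -, E, π, hP⟩ := hall (Finset.univ.filter fun τ => τ.card = 3) (by simp)
  obtain ⟨c, hc⟩ := hP.good
  obtain ⟨χ, hχ⟩ := hP.part c
  obtain ⟨T, -, hT, x, hx⟩ := hm (Fin m) Finset.univ (by simp) χ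
  obtain ⟨S, hS, hSt, rfl, hcS⟩ := hχ T hT
  refine hc S hSt x fun e he h3 => ⟨hS e he h3, ?_⟩
  have hcard : (e.image π).card = 3 := by
    rw [Finset.card_image_of_injOn (hP.inj e (hS e he h3)), h3]
  rw [hcS e he h3 (by simpa using hcard)]
  exact hx _ (Finset.image_subset_image he) hcard

end SignalSender

/-- Negative signal sender (BEL-gadget): for all `t ≥ 4`, `k ≥ 2` there is a 3-uniform
hypergraph with two edges sharing two vertices, admitting a `K_t^{(3)}`-free `k`-coloring,
such that in every `K_t^{(3)}`-free `k`-coloring the two edges get different colors. -/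
theorem stmt_3 (t k : ℕ) (ht : 4 ≤ t) (hk : 2 ≤ k) :
    ∃ (E : Finset (Finset ℕ)) (e f : Finset ℕ),
      (∀ g ∈ E, g.card = 3) ∧ e ∈ E ∧ f ∈ E ∧ (e ∩ f).card = 2 ∧
      (∃ c : Finset ℕ → Fin k, NoMonoK3 k t E c) ∧
      (∀ c : Finset ℕ → Fin k, NoMonoK3 k t E c → c e ≠ c f) := by
  classical
  obtain ⟨U, hU, F, e, f, a, b, h3, he, hf, hef, hab, hae, haf, hbe, hbf, ⟨c, hc⟩, hsep⟩ :=
    SignalSender.hasSender hk ht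
  have := Fintype.ofFinite U
  obtain ⟨j⟩ : Nonempty (U ↪ ℕ) := ⟨(Fintype.equivFin U).toEmbedding.trans Fin.valEmbedding⟩
  let E : Finset (Finset ℕ) := F.toFinite.toFinset.image fun g => g.map j
  have hE : ∀ g, g ∈ E ↔ ∃ g0 ∈ F, g0.map j = g := by simp [E]
  have hEmap : ∀ g ∈ F, g.map j ∈ E := fun g hg => (hE _).2 ⟨g, hg, rfl⟩
  have hEof : ∀ g : Finset U, g.map j ∈ E → g ∈ F := by
    intro g hg
    obtain ⟨g0, hg0, heq⟩ := (hE _).1 hg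
    rwa [← Finset.map_injective j heq]
  refine ⟨E, e.map j, f.map j, ?_, hEmap e he, hEmap f hf, ?_, ?_, ?_⟩
  · intro g hg
    obtain ⟨g0, hg0, rfl⟩ := (hE g).1 hg
    simpa using h3 g0 hg0
  · rw [← Finset.map_inter, Finset.card_map]
    refine le_antisymm ?_ ?_
    · by_contra! h
      have h1 : e ∩ f = e := Finset.eq_of_subset_of_card_le Finset.inter_subset_left
        (by rw [h3 e he]; omega)
      have h2 : e ∩ f = f := Finset.eq_of_subset_of_card_le Finset.inter_subset_right
        (by rw [h3 f hf]; omega)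
      exact hef (h1.symm.trans h2)
    · exact Finset.one_lt_card.2 ⟨a, by simp [hae, haf], b, by simp [hbe, hbf], hab⟩
  · refine ⟨Function.extend (fun g : Finset U => g.map j) c fun _ => ⟨0, by omega⟩, ?_⟩
    rintro ⟨S, hS, x, hx⟩
    obtain ⟨S0, rfl⟩ : ∃ S0 : Finset U, S = S0.map j := by
      refine ⟨S.preimage j j.injective.injOn, ?_⟩
      ext v
      simp only [Finset.mem_map, Finset.mem_preimage]
      constructor
      · -- every vertex of the clique lies in an edge
        intro hv
        obtain ⟨g, hg1, hg2, hg3⟩ := Finset.exists_subsuperset_card_eq (s := {v}) (t := S) (n := 3)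
          (by simpa using hv) (by simp) (by omega)
        obtain ⟨g0, -, rfl⟩ := (hE g).1 (hx g hg2 hg3).1
        obtain ⟨w, -, hw⟩ := Finset.mem_map.1 (hg1 (Finset.mem_singleton_self v))
        exact ⟨w, hw ▸ hv, hw⟩
      · rintro ⟨w, hw, rfl⟩
        exact hw
    refine hc S0 (by simpa using hS) x fun g hg hg3 => ?_
    obtain ⟨h1, h2⟩ := hx (g.map j) (Finset.map_subset_map.2 hg) (by simpa using hg3)
    rw [(Finset.map_injective j).extend_apply] at h2
    exact ⟨hEof g h1, h2⟩
  · intro c' hc'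
    have hg : SignalSender.Good t (E : Set (Finset ℕ)) c' := fun S hS x hx => hc' ⟨S, hS, x, hx⟩
    exact hsep _ (hg.restrict hEmap)
end

section
/- For all integers t ≥ 4 and k ≥ 2, there exists a 3-uniform hypergraph H together with two edges e, f of H with |e ∩ f| = 2, such that (1) H admits a k-coloring of its edges with no monochromatic copy of K_t^{(3)}, and (2) in every k-coloring of the edges of H with no monochromatic copy of K_t^{(3)}, the edges e and f receive the same color. -/
/-! ### Cliques and good colorings -/

/-- The triple `{a, b, c}`, with no decidability requirement on the vertex type. -/
noncomputable def tri {V : Type} (a b c : V) : Finset V := by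
  classical exact {a, b, c}

theorem mem_tri {V : Type} {a b c v : V} : v ∈ tri a b c ↔ v = a ∨ v = b ∨ v = c := by
  simp [tri]

theorem card_tri {V : Type} {a b c : V} (hab : a ≠ b) (hac : a ≠ c) (hbc : b ≠ c) :
    (tri a b c).card = 3 := by
  classical
  rw [tri, Finset.card_eq_three]
  exact ⟨a, b, c, hab, hac, hbc, by congr⟩

theorem map_tri {V W : Type} (f : V ↪ W) (a b c : V) :
    (tri a b c).map f = tri (f a) (f b) (f c) := by
  ext v
  simp only [Finset.mem_map, mem_tri]
  constructor
  · rintro ⟨u, rfl | rfl | rfl, rfl⟩ <;> simp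
  · rintro (rfl | rfl | rfl)
    exacts [⟨a, by simp, rfl⟩, ⟨b, by simp, rfl⟩, ⟨c, by simp, rfl⟩]

/-- `Q` is the vertex set of a copy of `K_t^{(3)}` in the 3-graph with edge set `E`. -/
def IsClq {V : Type} (t : ℕ) (E : Set (Finset V)) (Q : Finset V) : Prop :=
  Q.card = t ∧ ∀ e ⊆ Q, e.card = 3 → e ∈ E

/-- `c` is a good coloring of the 3-graph `E`: no copy of `K_t^{(3)}` is monochromatic. Only the
colors of edges of `E` matter. -/
def Good {V : Type} (k t : ℕ) (E : Set (Finset V)) (c : Finset V → Fin k) : Prop :=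
  ∀ Q, IsClq t E Q → ¬ ∃ x, ∀ e ⊆ Q, e.card = 3 → c e = x

theorem IsClq.exists_edge {V : Type} {t : ℕ} (ht : 4 ≤ t) {E : Set (Finset V)} {Q : Finset V}
    (hQ : IsClq t E Q) {u v : V} (hu : u ∈ Q) (hv : v ∈ Q) :
    ∃ e ⊆ Q, e.card = 3 ∧ u ∈ e ∧ v ∈ e := by
  classical
  obtain ⟨e, h1, h2, h3⟩ := Finset.exists_subsuperset_card_eq (s := {u, v}) (t := Q) (n := 3)
    (by intro x; simp; rintro (rfl | rfl) <;> assumption)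
    (by exact Finset.card_le_two.trans (by norm_num)) (by rw [hQ.1]; omega)
  exact ⟨e, h2, h3, h1 (by simp), h1 (by simp)⟩

theorem IsClq.map {V W : Type} {t : ℕ} {E : Set (Finset V)} {F : Set (Finset W)} (f : V ↪ W)
    (hf : ∀ e ∈ E, e.map f ∈ F) {Q : Finset V} (hQ : IsClq t E Q) : IsClq t F (Q.map f) := by
  refine ⟨by simpa using hQ.1, fun e he hc => ?_⟩
  obtain ⟨e, he', rfl⟩ := Finset.subset_map_iff.1 he
  exact hf _ (hQ.2 e he' (by simpa using hc))

theorem Good.comap {V W : Type} {k t : ℕ} {E : Set (Finset V)} {F : Set (Finset W)} (f : V ↪ W)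
    (hf : ∀ e ∈ E, e.map f ∈ F) {c : Finset W → Fin k} (hc : Good k t F c) :
    Good k t E (fun e => c (e.map f)) := by
  rintro Q hQ ⟨x, hx⟩
  refine hc _ (hQ.map f hf) ⟨x, fun e he hc => ?_⟩
  obtain ⟨e, he', rfl⟩ := Finset.subset_map_iff.1 he
  exact hx e he' (by simpa using hc)

/-! ### Sunflower gadgets -/

/-- A finite 3-graph with a distinguished sunflower: kernel `{a, b}` and petals `r i`, `i : I`.
The edges spanned by the vertices of the sunflower are exactly the triples `{a, b, r i}`. -/
structure Gadget (I : Type) where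
  V : Type
  fin : Finite V
  E : Set (Finset V)
  a : V
  b : V
  r : I → V
  hab : a ≠ b
  har : ∀ i, a ≠ r i
  hbr : ∀ i, b ≠ r i
  hr : Function.Injective r
  card3 : ∀ e ∈ E, e.card = 3
  petal : ∀ i, tri a b (r i) ∈ E
  ind : ∀ e ∈ E, (∀ v ∈ e, v = a ∨ v = b ∨ ∃ i, v = r i) → ∃ i, e = tri a b (r i)

/-- The set of colorings of the sunflower edges that extend to a good coloring. -/
def Gadget.Rel {I : Type} (k t : ℕ) (G : Gadget I) : Set (I → Fin k) :=
  {g | ∃ c, Good k t G.E c ∧ ∀ i, c (tri G.a G.b (G.r i)) = g i}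

/-- `R` is the set of sunflower colorings permitted by some gadget. -/
def Rz (k t : ℕ) (I : Type) (R : Set (I → Fin k)) : Prop := ∃ G : Gadget I, G.Rel k t = R

/-- The sunflower alone contains no clique, so it permits all colorings. -/
theorem rz_univ {k t : ℕ} (ht : 4 ≤ t) (hk : 0 < k) (I : Type) [Finite I] :
    Rz k t I Set.univ := by
  classical
  refine ⟨{ V := Bool ⊕ I, fin := inferInstance,
            E := {e | ∃ i, e = tri (Sum.inl true) (Sum.inl false) (Sum.inr i)},
            a := Sum.inl true, b := Sum.inl false, r := Sum.inr, hab := by simp,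
            har := by simp, hbr := by simp, hr := Sum.inr_injective, card3 := ?_,
            petal := fun i => ⟨i, rfl⟩, ind := fun e he _ => he }, ?_⟩
  · rintro e ⟨i, rfl⟩
    exact card_tri (by simp) (by simp) (by simp)
  · rw [Set.eq_univ_iff_forall]
    intro g
    refine ⟨fun e => if h : ∃ i, Sum.inr i ∈ e then g h.choose else ⟨0, hk⟩, ?_, ?_⟩
    · intro Q hQ
      -- two petal vertices never lie in a common edge, so a clique has at most three vertices
      exfalso
      have key : ∀ i j : I, Sum.inr i ∈ Q → Sum.inr j ∈ Q → i = j := by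
        intro i j hi hj
        obtain ⟨e, he, hc, hie, hje⟩ := hQ.exists_edge ht hi hj
        obtain ⟨l, rfl⟩ := hQ.2 e he hc
        simp only [mem_tri] at hie hje
        simp_all
      have hsub : ∃ w : Bool ⊕ I, Q ⊆ {Sum.inl true, Sum.inl false, w} := by
        by_cases h : ∃ i : I, Sum.inr i ∈ Q
        · obtain ⟨i, hi⟩ := h
          refine ⟨Sum.inr i, ?_⟩
          rintro (v | v) hv
          · cases v <;> simp
          · simp [key v i hv hi]
        · refine ⟨Sum.inl true, ?_⟩
          rintro (v | v) hv
          · cases v <;> simp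
          · exact absurd ⟨v, hv⟩ h
      obtain ⟨w, hw⟩ := hsub
      have := (Finset.card_le_card hw).trans Finset.card_le_three
      have := hQ.1
      omega
    · intro i
      have h : ∃ j : I, Sum.inr j ∈ tri (Sum.inl true : Bool ⊕ I) (Sum.inl false) (Sum.inr i) :=
        ⟨i, by simp [mem_tri]⟩
      refine (dif_pos h).trans ?_
      have := h.choose_spec
      rcases mem_tri.1 this with h1 | h1 | h1
      · cases h1
      · cases h1
      · rw [Sum.inr.inj h1]

/-- Forgetting petals of the sunflower restricts the permitted colorings. -/
theorem Rz.proj {k t : ℕ} {I J : Type} {R : Set (J → Fin k)} (h : Rz k t J R) (s : I → J)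
    (hs : Function.Injective s) : Rz k t I {g | ∃ g' ∈ R, g = g' ∘ s} := by
  obtain ⟨G, rfl⟩ := h
  refine ⟨{ G with
            r := G.r ∘ s, har := fun i => G.har _, hbr := fun i => G.hbr _, hr := G.hr.comp hs,
            petal := fun i => G.petal _, ind := ?_ }, ?_⟩
  · intro e he h
    obtain ⟨j, rfl⟩ := G.ind e he fun v hv => (h v hv).imp_right (Or.imp_right
      fun ⟨i, hi⟩ => ⟨s i, hi⟩)
    rcases h (G.r j) (by simp [mem_tri]) with h | h | ⟨i, hi⟩
    · exact absurd h.symm (G.har j)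
    · exact absurd h.symm (G.hbr j)
    · exact ⟨i, by rw [hi]⟩
  · ext g
    constructor
    · rintro ⟨c, hc, h⟩
      exact ⟨fun j => c (tri G.a G.b (G.r j)), ⟨c, hc, fun _ => rfl⟩, funext fun i => (h i).symm⟩
    · rintro ⟨_, ⟨c, hc, h⟩, rfl⟩
      exact ⟨c, hc, fun i => h (s i)⟩

/-- The set of permitted colorings is invariant under renaming the colors. -/
theorem Rz.perm {k t : ℕ} {I : Type} {R : Set (I → Fin k)} (h : Rz k t I R) {g : I → Fin k}
    (hg : g ∈ R) (σ : Equiv.Perm (Fin k)) : σ ∘ g ∈ R := by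
  obtain ⟨G, rfl⟩ := h
  obtain ⟨c, hc, h⟩ := hg
  refine ⟨σ ∘ c, ?_, fun i => by simp [h]⟩
  rintro Q hQ ⟨x, hx⟩
  exact hc Q hQ ⟨σ.symm x, fun e he h3 => by simp [← hx e he h3]⟩

/-- The embedding of the first gadget into the amalgam of two gadgets along sunflowers: sunflower
vertices go to the corresponding sunflower vertices of the second gadget, the others are new. -/
theorem exists_glue_embedding {I J : Type} (G : Gadget I) (H : Gadget J) (s : I → J)
    (hs : Function.Injective s) :
    ∃ φ : G.V ↪ H.V ⊕ G.V, φ G.a = Sum.inl H.a ∧ φ G.b = Sum.inl H.b ∧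
      (∀ i, φ (G.r i) = Sum.inl (H.r (s i))) ∧
      ∀ v w, φ v = Sum.inl w →
        (v = G.a ∧ w = H.a) ∨ (v = G.b ∧ w = H.b) ∨ ∃ i, v = G.r i ∧ w = H.r (s i) := by
  classical
  let f : G.V → H.V ⊕ G.V := fun v =>
    if v = G.a then Sum.inl H.a else if v = G.b then Sum.inl H.b else
      if h : ∃ i, v = G.r i then Sum.inl (H.r (s h.choose)) else Sum.inr v
  have ha : f G.a = Sum.inl H.a := by simp [f]
  have hb : f G.b = Sum.inl H.b := by simp [f, G.hab.symm]
  have hr : ∀ i, f (G.r i) = Sum.inl (H.r (s i)) := by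
    intro i
    have h : ∃ j, G.r i = G.r j := ⟨i, rfl⟩
    simp only [f, if_neg (G.har i).symm, if_neg (G.hbr i).symm, dif_pos h]
    rw [← G.hr h.choose_spec]
  have hn : ∀ v, v ≠ G.a → v ≠ G.b → (¬ ∃ i, v = G.r i) → f v = Sum.inr v := by
    intro v h1 h2 h3
    simp only [f, if_neg h1, if_neg h2, dif_neg h3]
  have hl : ∀ v w, f v = Sum.inl w →
      (v = G.a ∧ w = H.a) ∨ (v = G.b ∧ w = H.b) ∨ ∃ i, v = G.r i ∧ w = H.r (s i) := by
    intro v w h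
    by_cases h1 : v = G.a
    · subst h1; rw [ha] at h; exact .inl ⟨rfl, (Sum.inl.inj h).symm⟩
    by_cases h2 : v = G.b
    · subst h2; rw [hb] at h; exact .inr (.inl ⟨rfl, (Sum.inl.inj h).symm⟩)
    by_cases h3 : ∃ i, v = G.r i
    · obtain ⟨i, rfl⟩ := h3
      rw [hr] at h; exact .inr (.inr ⟨i, rfl, (Sum.inl.inj h).symm⟩)
    · rw [hn v h1 h2 h3] at h; cases h
  refine ⟨⟨f, fun u v huv => ?_⟩, ha, hb, hr, hl⟩
  rcases hv : f v with w | w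
  · rw [hv] at huv
    rcases hl u w huv with ⟨rfl, h⟩ | ⟨rfl, h⟩ | ⟨i, rfl, h⟩ <;>
    rcases hl v w hv with ⟨rfl, h'⟩ | ⟨rfl, h'⟩ | ⟨j, rfl, h'⟩ <;>
    rw [h] at h' <;>
    first
      | rfl
      | exact absurd h' H.hab
      | exact absurd h'.symm H.hab
      | exact absurd h' (H.har _)
      | exact absurd h'.symm (H.har _)
      | exact absurd h' (H.hbr _)
      | exact absurd h'.symm (H.hbr _)
      | rw [hs (H.hr h')]
  · have key : ∀ x, f x = Sum.inr w → x = w := by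
      intro x hx
      by_cases h1 : x = G.a
      · subst h1; rw [ha] at hx; cases hx
      by_cases h2 : x = G.b
      · subst h2; rw [hb] at hx; cases hx
      by_cases h3 : ∃ i, x = G.r i
      · obtain ⟨i, rfl⟩ := h3; rw [hr] at hx; cases hx
      · rw [hn x h1 h2 h3] at hx; exact Sum.inr.inj hx
    rw [key v hv, key u (huv.trans hv)]

/-- Amalgamating two gadgets along (part of) their sunflowers creates no new clique, so it
intersects the sets of permitted colorings. -/
theorem Rz.glue {k t : ℕ} (ht : 4 ≤ t) {I J : Type} {R : Set (I → Fin k)} {T : Set (J → Fin k)}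
    (hR : Rz k t I R) (hT : Rz k t J T) (s : I → J) (hs : Function.Injective s) :
    Rz k t J {g | g ∈ T ∧ g ∘ s ∈ R} := by
  classical
  obtain ⟨G, rfl⟩ := hR
  obtain ⟨H, rfl⟩ := hT
  obtain ⟨φ, ha, hb, hr, hl⟩ := exists_glue_embedding G H s hs
  let ψ : H.V ↪ H.V ⊕ G.V := ⟨Sum.inl, Sum.inl_injective⟩
  have hψ : ∀ v, ψ v = Sum.inl v := fun _ => rfl
  -- the two copies share exactly the sunflower edges
  have shared : ∀ e e', e.map φ = e'.map ψ → (e ∈ G.E ∨ e' ∈ H.E) →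
      ∃ i, e = tri G.a G.b (G.r i) ∧ e' = tri H.a H.b (H.r (s i)) := by
    intro e e' h hor
    have h1 : ∀ v ∈ e, v = G.a ∨ v = G.b ∨ ∃ i, v = G.r i := by
      intro v hv
      have : φ v ∈ e'.map ψ := h ▸ Finset.mem_map_of_mem φ hv
      obtain ⟨w, -, hw⟩ := Finset.mem_map.1 this
      rcases hl v w hw.symm with h | h | ⟨i, h⟩
      exacts [.inl h.1, .inr (.inl h.1), .inr (.inr ⟨i, h.1⟩)]
    have h2 : ∀ w ∈ e', ∃ v ∈ e, φ v = Sum.inl w := by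
      intro w hw
      have : ψ w ∈ e.map φ := h ▸ Finset.mem_map_of_mem ψ hw
      exact Finset.mem_map.1 this
    have hG : ∀ i, e = tri G.a G.b (G.r i) → e' = tri H.a H.b (H.r (s i)) := by
      rintro i rfl
      apply Finset.map_injective ψ
      rw [← h, map_tri, map_tri, ha, hb, hr]
      rfl
    rcases hor with he | he
    · obtain ⟨i, hi⟩ := G.ind e he h1
      exact ⟨i, hi, hG i hi⟩
    · obtain ⟨j, rfl⟩ := H.ind e' he (fun w hw => by
        obtain ⟨v, -, hv⟩ := h2 w hw
        rcases hl v w hv with h | h | ⟨i, h⟩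
        exacts [.inl h.2, .inr (.inl h.2), .inr (.inr ⟨_, h.2⟩)])
      obtain ⟨v, -, hv⟩ := h2 (H.r j) (by simp [mem_tri])
      rcases hl v _ hv with h' | h' | ⟨i, -, h'⟩
      · exact absurd h'.2.symm (H.har j)
      · exact absurd h'.2.symm (H.hbr j)
      · have hj := H.hr h'
        subst hj
        refine ⟨i, Finset.map_injective φ ?_, rfl⟩
        rw [h, map_tri, map_tri, ha, hb, hr]
        rfl
  let F : Set (Finset (H.V ⊕ G.V)) :=
    {x | (∃ e ∈ H.E, e.map ψ = x) ∨ ∃ e ∈ G.E, e.map φ = x}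
  have hFψ : ∀ e ∈ H.E, e.map ψ ∈ F := fun e he => .inl ⟨e, he, rfl⟩
  have hFφ : ∀ e ∈ G.E, e.map φ ∈ F := fun e he => .inr ⟨e, he, rfl⟩
  have backψ : ∀ e, e.map ψ ∈ F → e ∈ H.E := by
    rintro e (⟨e', he', h⟩ | ⟨e', he', h⟩)
    · rwa [← Finset.map_injective ψ h]
    · obtain ⟨i, -, rfl⟩ := shared _ _ h (.inl he')
      exact H.petal _
  have backφ : ∀ e, e.map φ ∈ F → e ∈ G.E := by
    rintro e (⟨e', he', h⟩ | ⟨e', he', h⟩)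
    · obtain ⟨i, rfl, -⟩ := shared _ _ h.symm (.inr he')
      exact G.petal _
    · rwa [← Finset.map_injective φ h]
  have clq : ∀ Q, IsClq t F Q →
      (∃ Q', IsClq t H.E Q' ∧ Q = Q'.map ψ) ∨ ∃ Q', IsClq t G.E Q' ∧ Q = Q'.map φ := by
    intro Q hQ
    by_cases h : ∃ w, Sum.inr w ∈ Q
    · obtain ⟨w, hw⟩ := h
      right
      have : Q ⊆ Finset.map φ (Q.preimage φ φ.injective.injOn) := by
        intro u hu
        obtain ⟨e, he, hc, hwe, hue⟩ := hQ.exists_edge ht hw hu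
        rcases hQ.2 e he hc with ⟨e', -, rfl⟩ | ⟨e', -, rfl⟩
        · obtain ⟨_, -, h⟩ := Finset.mem_map.1 hwe
          cases h
        · obtain ⟨v, -, rfl⟩ := Finset.mem_map.1 hue
          exact Finset.mem_map_of_mem _ (Finset.mem_preimage.2 hu)
      obtain ⟨Q', -, rfl⟩ := Finset.subset_map_iff.1 this
      refine ⟨Q', ⟨by simpa using hQ.1, fun e he hc => backφ e (hQ.2 _ ?_ (by simpa using hc))⟩, rfl⟩
      exact Finset.map_subset_map.2 he
    · left
      have : Q ⊆ Finset.map ψ (Q.preimage ψ ψ.injective.injOn) := by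
        rintro (u | u) hu
        · exact Finset.mem_map_of_mem ψ (Finset.mem_preimage.2 hu)
        · exact absurd ⟨u, hu⟩ h
      obtain ⟨Q', -, rfl⟩ := Finset.subset_map_iff.1 this
      refine ⟨Q', ⟨by simpa using hQ.1, fun e he hc => backψ e (hQ.2 _ ?_ (by simpa using hc))⟩, rfl⟩
      exact Finset.map_subset_map.2 he
  have htri : ∀ j, (tri H.a H.b (H.r j)).map ψ =
      tri (Sum.inl H.a) (Sum.inl H.b) (Sum.inl (H.r j)) := fun j => map_tri _ _ _ _
  have htri' : ∀ i, (tri G.a G.b (G.r i)).map φ =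
      tri (Sum.inl H.a) (Sum.inl H.b) (Sum.inl (H.r (s i))) := fun i => by
    rw [map_tri, ha, hb, hr]
  have := G.fin
  have := H.fin
  refine ⟨{ V := H.V ⊕ G.V, fin := inferInstance, E := F, a := Sum.inl H.a, b := Sum.inl H.b,
            r := fun j => Sum.inl (H.r j), hab := by simpa using H.hab,
            har := by simpa using H.har, hbr := by simpa using H.hbr,
            hr := Sum.inl_injective.comp H.hr, card3 := ?_, petal := ?_, ind := ?_ }, ?_⟩
  · rintro e (⟨e, he, rfl⟩ | ⟨e, he, rfl⟩)
    · simpa using H.card3 e he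
    · simpa using G.card3 e he
  · intro j
    exact .inl ⟨_, H.petal j, htri j⟩
  · intro e he hv
    have : e ⊆ Finset.map ψ (e.preimage ψ ψ.injective.injOn) := by
      rintro (u | u) hu
      · exact Finset.mem_map_of_mem ψ (Finset.mem_preimage.2 hu)
      · exfalso
        simpa using hv _ hu
    obtain ⟨e', -, rfl⟩ := Finset.subset_map_iff.1 this
    obtain ⟨j, rfl⟩ := H.ind e' (backψ e' he) (fun w hw => by
      simpa [hψ] using hv (ψ w) (Finset.mem_map_of_mem ψ hw))
    exact ⟨j, htri j⟩
  · ext g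
    constructor
    · rintro ⟨c, hc, h⟩
      refine ⟨⟨_, hc.comap ψ hFψ, fun j => ?_⟩, ⟨_, hc.comap φ hFφ, fun i => ?_⟩⟩
      · simp only [htri]
        exact h j
      · simp only [htri']
        exact h (s i)
    · rintro ⟨⟨c, hc, h⟩, ⟨d, hd, h'⟩⟩
      let f : Finset (H.V ⊕ G.V) → Fin k := fun x =>
        if hx : ∃ e ∈ H.E, e.map ψ = x then c hx.choose
        else d (x.preimage φ φ.injective.injOn)
      have f1 : ∀ e ∈ H.E, f (e.map ψ) = c e := by
        intro e he
        have hx : ∃ e' ∈ H.E, e'.map ψ = e.map ψ := ⟨e, he, rfl⟩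
        simp only [f, dif_pos hx]
        rw [Finset.map_injective ψ hx.choose_spec.2]
      have f2 : ∀ e ∈ G.E, f (e.map φ) = d e := by
        intro e he
        by_cases hx : ∃ e' ∈ H.E, e'.map ψ = e.map φ
        · obtain ⟨e', he', hx⟩ := hx
          rw [← hx, f1 e' he']
          obtain ⟨i, rfl, rfl⟩ := shared _ _ hx.symm (.inl he)
          rw [h, h', Function.comp]
        · simp only [f, dif_neg hx]
          congr 1
          ext v
          simp
      refine ⟨f, ?_, fun j => ?_⟩
      · rintro Q hQ ⟨x, hx⟩
        rcases clq Q hQ with ⟨Q', hQ', rfl⟩ | ⟨Q', hQ', rfl⟩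
        · refine hc Q' hQ' ⟨x, fun e he h3 => ?_⟩
          rw [← f1 e (hQ'.2 e he h3)]
          exact hx _ (Finset.map_subset_map.2 he) (by simpa using h3)
        · refine hd Q' hQ' ⟨x, fun e he h3 => ?_⟩
          rw [← f2 e (hQ'.2 e he h3)]
          exact hx _ (Finset.map_subset_map.2 he) (by simpa using h3)
      · rw [← h j, ← f1 _ (H.petal j)]
        exact congrArg f (htri j).symm

/-- There is a positive sender: a gadget with two petals whose edges receive equal colors in every
good coloring, and which has a good coloring. -/
def HasPos (k t : ℕ) : Prop :=
  ∃ R : Set (Fin 2 → Fin k), Rz k t (Fin 2) R ∧ R.Nonempty ∧ ∀ g ∈ R, g 0 = g 1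

/-- Imposing the relation `R` along several embeddings at once, by repeated gluing. -/
theorem rz_inter {k t : ℕ} (ht : 4 ≤ t) (hk : 0 < k) {I J : Type} [Finite J]
    {R : Set (I → Fin k)} (hR : Rz k t I R) (S : Finset (I ↪ J)) :
    Rz k t J {g | ∀ s ∈ S, g ∘ s ∈ R} := by
  classical
  induction S using Finset.induction_on with
  | empty => simpa using rz_univ ht hk J
  | insert s S _ ih =>
    have := Rz.glue ht hR ih s s.injective
    convert this using 1
    ext g
    simp [and_comm]

/-- The ordered pair of distinct elements `u`, `v`, as an embedding of `Fin 2`. -/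
def pairEmb {J : Type} {u v : J} (h : u ≠ v) : Fin 2 ↪ J :=
  ⟨![u, v], by
    intro i j hij
    fin_cases i <;> fin_cases j <;> simp_all [eq_comm]⟩

theorem pairEmb_zero {J : Type} {u v : J} (h : u ≠ v) : pairEmb h 0 = u := rfl

theorem pairEmb_one {J : Type} {u v : J} (h : u ≠ v) : pairEmb h 1 = v := rfl

theorem exists_perm_pair {α : Type} {a b c d : α} (hab : a ≠ b) (hcd : c ≠ d) :
    ∃ σ : Equiv.Perm α, σ a = c ∧ σ b = d := by
  classical
  have h : Equiv.swap a c b ≠ c := by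
    intro h
    apply hab
    rw [← Equiv.swap_apply_right a c] at h
    have := (Equiv.swap a c).injective (a₁ := b) (a₂ := a) (by simpa using h)
    exact this.symm
  refine ⟨Equiv.swap (Equiv.swap a c b) d * Equiv.swap a c, ?_, ?_⟩
  · rw [Equiv.Perm.mul_apply, Equiv.swap_apply_left, Equiv.swap_apply_of_ne_of_ne h.symm hcd]
  · rw [Equiv.Perm.mul_apply, Equiv.swap_apply_left]

/-- If some gadget forces two petals to have different colors, then another one forces two petals
to have the same color: take `k + 1` petals, pairwise different except for one pair. -/
theorem hasPos_of_neg {k t : ℕ} (ht : 4 ≤ t) (hk : 0 < k) {R : Set (Fin 2 → Fin k)}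
    (hR : Rz k t (Fin 2) R) (hne : R.Nonempty) (h : ∀ g ∈ R, g 0 ≠ g 1) : HasPos k t := by
  classical
  have hR' : ∀ g : Fin 2 → Fin k, g 0 ≠ g 1 → g ∈ R := by
    intro g hg
    obtain ⟨f, hf⟩ := hne
    obtain ⟨σ, h0, h1⟩ := exists_perm_pair (h f hf) hg
    convert hR.perm hf σ using 1
    funext i
    fin_cases i
    exacts [h0.symm, h1.symm]
  let x : Fin k := ⟨0, hk⟩
  let S : Finset (Fin 2 ↪ Option (Fin k)) := Finset.univ.filter fun s =>
    ¬ (s 0 = none ∧ s 1 = some x) ∧ ¬ (s 0 = some x ∧ s 1 = none)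
  refine ⟨_, (rz_inter ht hk hR S).proj (pairEmb (Option.some_ne_none x).symm)
    (pairEmb _).injective, ⟨_, fun o => o.getD x, ?_, rfl⟩, ?_⟩
  · intro s hs
    refine hR' _ ?_
    have hs' := (Finset.mem_filter.1 hs).2
    have hne : s 0 ≠ s 1 := fun h => by simpa using s.injective h
    show (s 0).getD x ≠ (s 1).getD x
    intro heq
    cases h0 : s 0 with
    | none =>
      cases h1 : s 1 with
      | none => exact hne (h0.trans h1.symm)
      | some j =>
        rw [h0, h1] at heq hs'
        simp only [Option.getD_none, Option.getD_some] at heq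
        simp [heq] at hs'
    | some i =>
      cases h1 : s 1 with
      | none =>
        rw [h0, h1] at heq hs'
        simp only [Option.getD_none, Option.getD_some] at heq
        simp [heq] at hs'
      | some j =>
        rw [h0, h1] at heq hne
        simp only [Option.getD_some] at heq
        exact hne (by rw [heq])
  · rintro _ ⟨g, hg, rfl⟩
    show g none = g (some x)
    have hinj : Function.Injective fun i : Fin k => g (some i) := by
      intro i j hij
      by_contra hne
      have hne' : (some i : Option (Fin k)) ≠ some j := fun h => hne (Option.some.inj h)
      refine h _ (hg (pairEmb hne') ?_) hij
      simp [S, pairEmb_zero, pairEmb_one]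
    obtain ⟨j, hj⟩ := Finite.surjective_of_injective hinj (g none)
    by_cases hjx : j = x
    · rw [← hjx]; exact hj.symm
    · refine absurd hj.symm (h _ (hg (pairEmb (Option.some_ne_none j).symm) ?_))
      simp [S, pairEmb_zero, pairEmb_one, hjx]

/-- Two disjoint nonempty sets of permitted colorings yield a positive sender. If their
restrictions to the petals other than `0` are still disjoint, there are fewer petals to consider.
Otherwise glue the two gadgets along these petals only: the two copies of petal `0` can never have
the same color. -/
theorem hasPos_of_disjoint {k t : ℕ} (ht : 4 ≤ t) (hk : 0 < k) (n : ℕ) :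
    ∀ A B : Set (Fin n → Fin k), Rz k t (Fin n) A → Rz k t (Fin n) B → A.Nonempty → B.Nonempty →
      Disjoint A B → HasPos k t := by
  induction n with
  | zero =>
    rintro A B - - ⟨a, ha⟩ ⟨b, hb⟩ h
    exact absurd (Subsingleton.elim a b ▸ ha) (Set.disjoint_right.1 h hb)
  | succ n ih =>
    intro A B hA hB hA0 hB0 h
    by_cases hd : Disjoint {g : Fin n → Fin k | ∃ g' ∈ A, g = g' ∘ Fin.succ}
        {g : Fin n → Fin k | ∃ g' ∈ B, g = g' ∘ Fin.succ}
    · exact ih _ _ (hA.proj _ (Fin.succ_injective n)) (hB.proj _ (Fin.succ_injective n))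
        (let ⟨_, hg⟩ := hA0; ⟨_, _, hg, rfl⟩) (let ⟨_, hg⟩ := hB0; ⟨_, _, hg, rfl⟩) hd
    · obtain ⟨_, ⟨a, ha, rfl⟩, ⟨b, hb, hab⟩⟩ := Set.not_disjoint_iff.1 hd
      -- `a` and `b` differ exactly at `0`; give `A` and `B` separate copies of that petal
      let s : Fin (n + 1) → Option (Fin (n + 1)) := fun i => if i = 0 then none else some i
      have hs : Function.Injective s := by
        intro i j hij
        by_cases hi : i = 0 <;> by_cases hj : j = 0 <;> simp_all [s]
      have hT := hB.glue ht (hA.glue ht (rz_univ ht hk (Option (Fin (n + 1)))) some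
        (Option.some_injective _)) s hs
      refine hasPos_of_neg ht hk (hT.proj (pairEmb (Option.some_ne_none 0).symm)
        (pairEmb _).injective) ⟨_, fun o => o.elim (b 0) a, ⟨⟨trivial, ha⟩, ?_⟩, rfl⟩ ?_
      · convert hb using 1
        funext i
        cases i using Fin.cases with
        | zero => simp [s]
        | succ i => simpa [s] using congrFun hab i
      · rintro _ ⟨g, ⟨⟨-, h1⟩, h2⟩, rfl⟩
        show g none ≠ g (some 0)
        intro heq
        refine Set.disjoint_left.1 h h1 ?_
        convert h2 using 1
        funext i
        by_cases hi : i = 0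
        · subst hi; simpa [s] using heq.symm
        · simp [s, hi]

/-- If there is no positive sender, nonempty sets of permitted colorings cannot be disjoint, so
imposing `R` on all `n`-tuples of `k * n + 1` petals, one tuple after the other, never becomes
contradictory. Then some `n` of these petals have the same color. -/
theorem hasPos_of_no_const_fin {k t : ℕ} (ht : 4 ≤ t) (hk : 0 < k) (n : ℕ)
    {R : Set (Fin n → Fin k)} (hR : Rz k t (Fin n) R) (hne : R.Nonempty)
    (h : ∀ x, (fun _ => x) ∉ R) : HasPos k t := by
  classical
  by_contra hno
  have key : ∀ S : Finset (Fin n ↪ Fin (k * n + 1)),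
      {g : Fin (k * n + 1) → Fin k | ∀ s ∈ S, g ∘ s ∈ R}.Nonempty := by
    intro S
    induction S using Finset.induction_on with
    | empty => exact ⟨fun _ => ⟨0, hk⟩, by simp⟩
    | insert s S _ ih =>
      by_contra hemp
      refine hno (hasPos_of_disjoint ht hk n _ _ ((rz_inter ht hk hR S).proj s s.injective) hR
        (let ⟨_, hg⟩ := ih; ⟨_, _, hg, rfl⟩) hne ?_)
      rw [Set.disjoint_left]
      rintro _ ⟨g, hg, rfl⟩ hgR
      refine hemp ⟨g, fun s' hs' => ?_⟩
      rcases Finset.mem_insert.1 hs' with rfl | hs'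
      exacts [hgR, hg _ hs']
  obtain ⟨g, hg⟩ := key Finset.univ
  obtain ⟨x, hx⟩ := Fintype.exists_lt_card_fiber_of_mul_lt_card (f := g) (n := n) (by simp)
  obtain ⟨U, hU, hUc⟩ := Finset.exists_subset_card_eq hx.le
  refine h x ?_
  convert hg (U.orderEmbOfFin hUc).toEmbedding (Finset.mem_univ _) using 1
  funext i
  have := hU (U.orderEmbOfFin_mem hUc i)
  simpa [eq_comm] using this

/-- A gadget whose petals are never all of one color yields a positive sender. -/
theorem hasPos_of_no_const {k t : ℕ} (ht : 4 ≤ t) (hk : 0 < k) {I : Type} [Finite I]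
    {R : Set (I → Fin k)} (hR : Rz k t I R) (hne : R.Nonempty)
    (h : ∀ x, (fun _ => x) ∉ R) : HasPos k t := by
  obtain ⟨n, ⟨e⟩⟩ := Finite.exists_equiv_fin I
  obtain ⟨g, hg⟩ := hne
  refine hasPos_of_no_const_fin ht hk n (hR.proj e.symm e.symm.injective) ⟨_, g, hg, rfl⟩ ?_
  rintro x ⟨g, hg, hx⟩
  refine h x ?_
  convert hg using 1
  funext i
  simpa using congrFun hx (e i)

/-! ### Critical hypergraphs -/

/-- Two cliques through the same edge `h` have no edge joining them outside `h`. In particular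
they meet exactly in `h`. -/
def CliqueSep {V : Type} (t : ℕ) (E : Set (Finset V)) : Prop :=
  ∀ h ∈ E, ∀ Q Q', IsClq t E Q → IsClq t E Q' → h ⊆ Q → h ⊆ Q' → Q ≠ Q' →
    ∀ u ∈ Q, u ∉ h → ∀ v ∈ Q', v ∉ h → ∀ e ∈ E, u ∈ e → v ∉ e

theorem IsClq.mono {V : Type} {t : ℕ} {E F : Set (Finset V)} (hEF : E ⊆ F) {Q : Finset V}
    (hQ : IsClq t E Q) : IsClq t F Q :=
  ⟨hQ.1, fun e he h3 => hEF (hQ.2 e he h3)⟩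

theorem CliqueSep.mono {V : Type} {t : ℕ} {E F : Set (Finset V)} (hEF : E ⊆ F)
    (h : CliqueSep t F) : CliqueSep t E :=
  fun e he Q Q' hQ hQ' heQ heQ' hne u hu hue v hv hve f hf =>
    h e (hEF he) Q Q' (hQ.mono hEF) (hQ'.mono hEF) heQ heQ' hne u hu hue v hv hve f (hEF hf)

/-- A 3-graph without good colorings and with well separated cliques yields a positive sender.
Delete an edge `h = {a, b, c}` from a critical subgraph and choose, in each clique `Q` through
`h`, a vertex `r Q` off `h`. In a good coloring of the rest the edges `{a, b, r Q}` see every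
color, as otherwise `h` could be colored as well. -/
theorem hasPos_of_not_good {k t : ℕ} (ht : 4 ≤ t) (hk : 2 ≤ k) {V : Type} [Finite V]
    {E : Set (Finset V)} (h3 : ∀ e ∈ E, e.card = 3) (hbad : ∀ c, ¬ Good k t E c)
    (hsep : CliqueSep t E) : HasPos k t := by
  classical
  obtain ⟨m, ⟨hmE, hmbad⟩, hmin⟩ := (wellFounded_lt (α := Set (Finset V))).has_min
    {F | F ⊆ E ∧ ∀ c, ¬ Good k t F c} ⟨E, subset_rfl, hbad⟩
  replace hsep := hsep.mono hmE
  obtain ⟨h, hh⟩ : m.Nonempty := by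
    rw [Set.nonempty_iff_ne_empty]
    rintro rfl
    refine hmbad (fun _ => ⟨0, by omega⟩) fun Q hQ _ => ?_
    obtain ⟨e, he, hc⟩ := Finset.exists_subset_card_eq (s := Q) (n := 3) (by rw [hQ.1]; omega)
    exact hQ.2 e he hc
  obtain ⟨c₀, hc₀⟩ : ∃ c, Good k t (m \ {h}) c := by
    by_contra hno
    refine hmin (m \ {h}) ⟨Set.sdiff_subset.trans hmE, not_exists.1 hno⟩ ?_
    exact ⟨Set.sdiff_subset, fun hsub => (hsub hh).2 rfl⟩
  obtain ⟨a, b, c, hab, -, -, habc⟩ := Finset.card_eq_three.1 (h3 h (hmE hh))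
  have hah : a ∈ h := by simp [habc]
  have hbh : b ∈ h := by simp [habc]
  let I := {Q : Finset V // IsClq t m Q ∧ h ⊆ Q}
  have hr : ∀ Q : I, ∃ v ∈ Q.1, v ∉ h := by
    rintro ⟨Q, hQ, -⟩
    refine Finset.exists_mem_notMem_of_card_lt_card ?_
    rw [h3 h (hmE hh), hQ.1]
    omega
  choose r hrQ hrh using hr
  have hedge : ∀ Q Q' : I, ∀ e ∈ m, r Q ∈ e → r Q' ∈ e → Q = Q' := by
    intro Q Q' e he h1 h2
    by_contra hne
    exact hsep h hh Q.1 Q'.1 Q.2.1 Q'.2.1 Q.2.2 Q'.2.2 (fun h => hne (Subtype.ext h)) _ (hrQ Q)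
      (hrh Q) _ (hrQ Q') (hrh Q') e he h1 h2
  have hpet : ∀ Q : I, tri a b (r Q) ⊆ Q.1 := by
    intro Q v hv
    rcases mem_tri.1 hv with rfl | rfl | rfl
    exacts [Q.2.2 hah, Q.2.2 hbh, hrQ Q]
  have har : ∀ Q : I, a ≠ r Q := fun Q h => hrh Q (h ▸ hah)
  have hbr : ∀ Q : I, b ≠ r Q := fun Q h => hrh Q (h ▸ hbh)
  have hc3 : ∀ Q : I, (tri a b (r Q)).card = 3 := fun Q => card_tri hab (har Q) (hbr Q)
  have hpetal : ∀ Q : I, tri a b (r Q) ∈ m := fun Q => Q.2.1.2 _ (hpet Q) (hc3 Q)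
  have hph : ∀ Q : I, tri a b (r Q) ≠ h := by
    intro Q heq
    refine hrh Q ?_
    rw [← heq]
    exact mem_tri.2 (.inr (.inr rfl))
  let G : Gadget I :=
    { V := V, fin := inferInstance, E := m \ {h}, a := a, b := b, r := r, hab := hab,
      har := har, hbr := hbr,
      hr := fun Q Q' hQ => hedge Q Q' _ (hpetal Q) (by simp [mem_tri]) (by simp [mem_tri, hQ])
      card3 := fun e he => h3 e (hmE he.1)
      petal := fun Q => ⟨hpetal Q, hph Q⟩
      ind := by
        intro e he hv
        have hc := h3 e (hmE he.1)
        by_cases hex : ∃ Q, r Q ∈ e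
        · obtain ⟨Q, hQ⟩ := hex
          refine ⟨Q, Finset.eq_of_subset_of_card_le (fun v hve => ?_) (by rw [hc3, hc])⟩
          rcases hv v hve with h | h | ⟨Q', rfl⟩
          · simp [mem_tri, h]
          · simp [mem_tri, h]
          · rw [hedge Q' Q e he.1 hve hQ]
            simp [mem_tri]
        · have hsub : e ⊆ {a, b} := by
            intro v hve
            rcases hv v hve with h | h | ⟨Q', rfl⟩
            · simp [h]
            · simp [h]
            · exact absurd ⟨Q', hve⟩ hex
          have := (Finset.card_le_card hsub).trans Finset.card_le_two
          omega }
  refine hasPos_of_no_const ht (by omega) ⟨G, rfl⟩ ⟨_, c₀, hc₀, fun _ => rfl⟩ ?_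
  rintro x ⟨d, hd, hx⟩
  have : Nontrivial (Fin k) := Fin.nontrivial_iff_two_le.2 hk
  obtain ⟨y, hy⟩ := exists_ne x
  refine hmbad (Function.update d h y) ?_
  rintro Q hQ ⟨z, hz⟩
  by_cases hhQ : h ⊆ Q
  · have h1 := hz h hhQ (h3 h (hmE hh))
    have h2 := hz _ (hpet ⟨Q, hQ, hhQ⟩) (hc3 _)
    rw [Function.update_self] at h1
    rw [Function.update_of_ne (hph _)] at h2
    exact hy (h1.trans (h2.symm.trans (hx ⟨Q, hQ, hhQ⟩)))
  · have hne : ∀ e ⊆ Q, e ≠ h := fun e he heq => hhQ (heq ▸ he)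
    have hQ' : IsClq t (m \ {h}) Q := ⟨hQ.1, fun e he hc => ⟨hQ.2 e he hc, hne e he⟩⟩
    refine hd Q hQ' ⟨z, fun e he hc => ?_⟩
    rw [← hz e he hc, Function.update_of_ne (hne e he)]

/-! ### The partite construction -/

/-- An `n`-partite 3-graph (parts given by `π`) partially satisfying the conclusion of the partite
construction, namely for the triples of parts in `σ`: every coloring agrees, on some clique over
each `t`-set of parts, with a coloring depending only on the parts, as far as edges over `σ` are
concerned, and edges not over `σ` still lie in at most one clique. -/
structure Sys (k t n : ℕ) (σ : Finset (Finset (Fin n))) where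
  V : Type
  fin : Finite V
  π : V → Fin n
  E : Set (Finset V)
  card3 : ∀ e ∈ E, e.card = 3
  inj : ∀ e ∈ E, Set.InjOn π e
  sep : CliqueSep t E
  uniq : ∀ h ∈ E, h.image π ∉ σ → ∀ Q Q', IsClq t E Q → IsClq t E Q' → h ⊆ Q → h ⊆ Q' → Q = Q'
  ramsey : ∀ c : Finset V → Fin k, ∃ χ : Finset (Fin n) → Fin k, ∀ S : Finset (Fin n),
    S.card = t → ∃ Q, IsClq t E Q ∧ Q.image π = S ∧
      ∀ e ⊆ Q, e.card = 3 → e.image π ∈ σ → c e = χ (e.image π)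

/-- The starting point: disjoint cliques, one over each `t`-set of parts. -/
theorem Sys.base {k t n : ℕ} (ht : 4 ≤ t) (hk : 0 < k) : Nonempty (Sys k t n ∅) := by
  classical
  let T := {S : Finset (Fin n) // S.card = t}
  let E : Set (Finset (T × Fin n)) := {e | e.card = 3 ∧ ∃ S : T, ∀ v ∈ e, v.1 = S ∧ v.2 ∈ S.1}
  let ψ : T → Fin n ↪ T × Fin n := fun S => ⟨fun i => (S, i), fun i j h => (Prod.mk.inj h).2⟩
  have hclq : ∀ Q, IsClq t E Q → ∀ w ∈ Q, Q = w.1.1.map (ψ w.1) := by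
    intro Q hQ w hw
    refine Finset.eq_of_subset_of_card_le (fun v hv => ?_) (by
      rw [Finset.card_map, w.1.2, hQ.1])
    obtain ⟨e, he, hc, hwe, hve⟩ := hQ.exists_edge ht hw hv
    obtain ⟨-, S, hS⟩ := hQ.2 e he hc
    have h1 := hS w hwe
    have h2 := hS v hve
    rw [Finset.mem_map]
    exact ⟨v.2, by rw [h1.1]; exact h2.2, Prod.ext (h1.1.trans h2.1.symm) rfl⟩
  have huniq : ∀ h ∈ E, ∀ Q Q', IsClq t E Q → IsClq t E Q' → h ⊆ Q → h ⊆ Q' → Q = Q' := by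
    intro h hh Q Q' hQ hQ' hhQ hhQ'
    obtain ⟨w, hw⟩ := Finset.card_pos.1 (hh.1.symm ▸ three_pos : 0 < h.card)
    rw [hclq Q hQ w (hhQ hw), hclq Q' hQ' w (hhQ' hw)]
  refine ⟨{ V := T × Fin n, fin := inferInstance, π := Prod.snd, E := E,
            card3 := fun e he => he.1, inj := ?_, sep := ?_,
            uniq := fun h hh _ => huniq h hh, ramsey := ?_ }⟩
  · rintro e ⟨-, S, hS⟩ u hu v hv huv
    exact Prod.ext ((hS u hu).1.trans (hS v hv).1.symm) huv
  · intro h hh Q Q' hQ hQ' hhQ hhQ' hne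
    exact absurd (huniq h hh Q Q' hQ hQ' hhQ hhQ') hne
  · intro c
    refine ⟨fun _ => ⟨0, hk⟩, fun S hS => ⟨S.map (ψ ⟨S, hS⟩), ⟨by simpa using hS, ?_⟩, ?_, ?_⟩⟩
    · intro e he hc
      refine ⟨hc, ⟨S, hS⟩, fun v hv => ?_⟩
      obtain ⟨i, hi, rfl⟩ := Finset.mem_map.1 (he hv)
      exact ⟨rfl, hi⟩
    · rw [Finset.map_eq_image, Finset.image_image]
      exact Finset.image_id
    · intro e _ _ he
      exact absurd he (Finset.notMem_empty _)

/-- Amalgamation of copies `φ l` of a partite 3-graph which meet only over `τ`, and meet nicely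
there: each edge of the copy `φ l'` meets the copy `φ l` inside an edge of the latter (`hpull`). -/
theorem Sys.amalgamate {k t n : ℕ} (ht : 4 ≤ t) {σ : Finset (Finset (Fin n))}
    {τ : Finset (Fin n)} (hτ : τ.card = 3) (P : Sys k t n σ) {L W : Type} [Finite W]
    (φ : L → P.V ↪ W) (π' : W → Fin n) (hπ : ∀ l v, π' (φ l v) = P.π v)
    (hsep : ∀ l l' v v', φ l v = φ l' v' → P.π v ∉ τ → l = l')
    (hpull : ∀ l l', ∀ e' ∈ P.E, ∃ e ∈ P.E, ∀ u, φ l u ∈ e'.map (φ l') → u ∈ e)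
    (hmono : ∀ c : Finset W → Fin k, ∃ l x, ∀ e ∈ P.E, e.image P.π = τ → c (e.map (φ l)) = x) :
    Nonempty (Sys k t n (insert τ σ)) := by
  classical
  let E' : Set (Finset W) := {x | ∃ l, ∃ e ∈ P.E, e.map (φ l) = x}
  have himg : ∀ l (e : Finset P.V), (e.map (φ l)).image π' = e.image P.π := by
    intro l e
    rw [Finset.map_eq_image, Finset.image_image]
    exact Finset.image_congr fun v _ => hπ l v
  have hback : ∀ l e, e.card = 3 → e.map (φ l) ∈ E' → e ∈ P.E := by
    rintro l e hc ⟨l', e', he', h⟩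
    obtain ⟨e₀, he₀, h₀⟩ := hpull l l' e' he'
    have : e ⊆ e₀ := fun u hu => h₀ u (h ▸ Finset.mem_map_of_mem _ hu)
    rwa [Finset.eq_of_subset_of_card_le this (by rw [hc, P.card3 _ he₀])]
  have hcard : ∀ e ∈ E', e.card = 3 := by
    rintro _ ⟨l, e, he, rfl⟩
    simpa using P.card3 e he
  have hinj : ∀ e ∈ E', Set.InjOn π' e := by
    rintro _ ⟨l, e, he, rfl⟩ u hu v hv huv
    obtain ⟨u, hu', rfl⟩ := Finset.mem_map.1 (Finset.mem_coe.1 hu)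
    obtain ⟨v, hv', rfl⟩ := Finset.mem_map.1 (Finset.mem_coe.1 hv)
    rw [hπ, hπ] at huv
    rw [P.inj e he hu' hv' huv]
  have hinjQ : ∀ Q, IsClq t E' Q → Set.InjOn π' Q := by
    intro Q hQ u hu v hv huv
    obtain ⟨e, he, hc, hue, hve⟩ := hQ.exists_edge ht hu hv
    exact hinj e (hQ.2 e he hc) hue hve huv
  -- the copy containing a vertex off `τ` is determined by any edge through that vertex
  have hcopy : ∀ l u, P.π u ∉ τ → ∀ e ∈ E', φ l u ∈ e → ∃ e₀ ∈ P.E, e = e₀.map (φ l) := by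
    rintro l u hu _ ⟨l', e, he, rfl⟩ hue
    obtain ⟨u', -, hu'⟩ := Finset.mem_map.1 hue
    obtain rfl := hsep l l' u u' hu'.symm hu
    exact ⟨e, he, rfl⟩
  have hclq : ∀ Q', IsClq t E' Q' → ∃ l Q, IsClq t P.E Q ∧ Q' = Q.map (φ l) := by
    intro Q' hQ'
    obtain ⟨i, hi, hiτ⟩ : ∃ i ∈ Q'.image π', i ∉ τ := by
      refine Finset.exists_mem_notMem_of_card_lt_card ?_
      rw [hτ, Finset.card_image_of_injOn (hinjQ Q' hQ'), hQ'.1]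
      omega
    obtain ⟨w, hw, rfl⟩ := Finset.mem_image.1 hi
    obtain ⟨l, u, rfl⟩ : ∃ l u, φ l u = w := by
      obtain ⟨e, he, hc, hwe, -⟩ := hQ'.exists_edge ht hw hw
      obtain ⟨l, e, -, rfl⟩ := hQ'.2 e he hc
      obtain ⟨u, -, hu⟩ := Finset.mem_map.1 hwe
      exact ⟨l, u, hu⟩
    rw [hπ] at hiτ
    have hsub : Q' ⊆ (Q'.preimage (φ l) (φ l).injective.injOn).map (φ l) := by
      intro v hv
      obtain ⟨e, he, hc, hue, hve⟩ := hQ'.exists_edge ht hw hv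
      obtain ⟨e, -, rfl⟩ := hcopy l u hiτ e (hQ'.2 e he hc) hue
      obtain ⟨v, -, rfl⟩ := Finset.mem_map.1 hve
      exact Finset.mem_map_of_mem _ (Finset.mem_preimage.2 hv)
    obtain ⟨Q, -, rfl⟩ := Finset.subset_map_iff.1 hsub
    refine ⟨l, Q, ⟨by simpa using hQ'.1, fun e he hc => hback l e hc ?_⟩, rfl⟩
    exact hQ'.2 _ (Finset.map_subset_map.2 he) (by simpa using hc)
  have hne : ∀ h ∈ E', ∀ l l' (Q Q' : Finset P.V), h ⊆ Q.map (φ l) → h ⊆ Q'.map (φ l') → l ≠ l' →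
      h.image π' = τ := by
    intro h hh l l' Q Q' hhQ hhQ' hll
    refine Finset.eq_of_subset_of_card_le (fun i hi => ?_) ?_
    · obtain ⟨w, hw, rfl⟩ := Finset.mem_image.1 hi
      obtain ⟨u, -, rfl⟩ := Finset.mem_map.1 (hhQ hw)
      obtain ⟨u', -, hu'⟩ := Finset.mem_map.1 (hhQ' hw)
      by_contra hτ'
      rw [hπ] at hτ'
      exact hll (hsep l l' u u' hu'.symm hτ')
    · rw [hτ, Finset.card_image_of_injOn (hinj h hh), hcard h hh]
  have := P.fin
  refine ⟨{ V := W, fin := inferInstance, π := π', E := E', card3 := hcard, inj := hinj,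
            sep := ?_, uniq := ?_, ramsey := ?_ }⟩
  · intro h hh Q₁ Q₂ hQ₁ hQ₂ hh₁ hh₂ hQQ u hu huh v hv hvh e he hue hve
    have huτ : ∀ Q, IsClq t E' Q → h ⊆ Q → h.image π' = τ → ∀ w ∈ Q, w ∉ h → π' w ∉ τ := by
      rintro Q hQ hhQ hτ' w hw hwh hwτ
      rw [← hτ'] at hwτ
      obtain ⟨w', hw', heq⟩ := Finset.mem_image.1 hwτ
      exact hwh (hinjQ Q hQ (hhQ hw') hw heq ▸ hw')
    have hu' := huτ Q₁ hQ₁ hh₁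
    have hv' := huτ Q₂ hQ₂ hh₂
    obtain ⟨l₁, Q₁, hq₁, rfl⟩ := hclq Q₁ hQ₁
    obtain ⟨l₂, Q₂, hq₂, rfl⟩ := hclq Q₂ hQ₂
    by_cases hll : l₁ = l₂
    · subst hll
      obtain ⟨h, hhs, rfl⟩ := Finset.subset_map_iff.1 hh₁
      obtain ⟨u, hu₁, rfl⟩ := Finset.mem_map.1 hu
      obtain ⟨v, hv₁, rfl⟩ := Finset.mem_map.1 hv
      obtain ⟨l, e, he, rfl⟩ := he
      obtain ⟨e₀, he₀, h₀⟩ := hpull l₁ l e he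
      refine P.sep h (hback l₁ h (by simpa using hcard _ hh) hh) Q₁ Q₂ hq₁ hq₂ hhs
        (Finset.map_subset_map.1 hh₂) (fun h => hQQ (by rw [h])) u hu₁ ?_ v hv₁ ?_ e₀ he₀
        (h₀ u hue) (h₀ v hve)
      · exact fun hm => huh (Finset.mem_map_of_mem _ hm)
      · exact fun hm => hvh (Finset.mem_map_of_mem _ hm)
    · -- now `u` and `v` lie off `τ`, in different copies
      have hτ' := hne h hh l₁ l₂ Q₁ Q₂ hh₁ hh₂ hll
      have hu' := hu' hτ' u hu huh
      have hv' := hv' hτ' v hv hvh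
      obtain ⟨u, -, rfl⟩ := Finset.mem_map.1 hu
      obtain ⟨v, -, rfl⟩ := Finset.mem_map.1 hv
      rw [hπ] at hu' hv'
      obtain ⟨e, -, rfl⟩ := hcopy l₁ u hu' e he hue
      obtain ⟨v', -, hvv⟩ := Finset.mem_map.1 hve
      exact hll (hsep l₂ l₁ v v' hvv.symm hv').symm
  · intro h hh hhσ Q₁ Q₂ hQ₁ hQ₂ hh₁ hh₂
    rw [Finset.mem_insert, not_or] at hhσ
    obtain ⟨l₁, Q₁, hq₁, rfl⟩ := hclq Q₁ hQ₁
    obtain ⟨l₂, Q₂, hq₂, rfl⟩ := hclq Q₂ hQ₂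
    by_cases hll : l₁ = l₂
    · subst hll
      obtain ⟨h, hhs, rfl⟩ := Finset.subset_map_iff.1 hh₁
      rw [himg] at hhσ
      rw [P.uniq h (hback l₁ h (by simpa using hcard _ hh) hh) hhσ.2 Q₁ Q₂ hq₁ hq₂ hhs
        (Finset.map_subset_map.1 hh₂)]
    · exact absurd (hne h hh l₁ l₂ Q₁ Q₂ hh₁ hh₂ hll) hhσ.1
  · intro c
    obtain ⟨l, x, hx⟩ := hmono c
    obtain ⟨χ, hχ⟩ := P.ramsey fun e => c (e.map (φ l))
    refine ⟨Function.update χ τ x, fun S hS => ?_⟩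
    obtain ⟨Q, hQ, hQS, hQc⟩ := hχ S hS
    refine ⟨Q.map (φ l), hQ.map (F := E') (φ l) (fun e he => ⟨l, e, he, rfl⟩), by rw [himg, hQS], ?_⟩
    intro e he hc hσ
    obtain ⟨e, he', rfl⟩ := Finset.subset_map_iff.1 he
    rw [Finset.card_map] at hc
    rw [himg] at hσ ⊢
    by_cases heq : e.image P.π = τ
    · rw [heq, Function.update_self]
      exact hx e (hQ.2 e he' hc) heq
    · rw [Function.update_of_ne heq]
      exact hQc e he' hc ((Finset.mem_insert.1 hσ).resolve_left heq)

/-- One step of the partite construction. The edges over `τ` are the letters of a Hales–Jewett cube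
`ι → α`; there is a copy of the system for each combinatorial line, and it meets the other ones
only over `τ`, where the point `x` of the cube becomes the edge with vertices `j ↦ vt (x j) i`. -/
theorem Sys.step {k t n : ℕ} (ht : 4 ≤ t) {σ : Finset (Finset (Fin n))}
    {τ : Finset (Fin n)} (hτ : τ.card = 3) (P : Sys k t n σ) :
    Nonempty (Sys k t n (insert τ σ)) := by
  classical
  have := P.fin
  let α := {e : Finset P.V // e ∈ P.E ∧ e.image P.π = τ}
  have hvt : ∀ (e : α) (i : {i // i ∈ τ}), ∃ u ∈ e.1, P.π u = i.1 := by
    rintro ⟨e, -, he⟩ ⟨i, hi⟩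
    rw [← he] at hi
    exact Finset.mem_image.1 hi
  choose vt hvt₁ hvt₂ using hvt
  obtain ⟨ι, _, hHJ⟩ := Combinatorics.Line.exists_mono_in_high_dimension α (Fin k)
  let L := Combinatorics.Line α ι
  have : Finite L := Finite.of_injective (fun l : L => l.idxFun) fun l l' h => by
    cases l; cases l'; cases h; rfl
  let W := ((ι → P.V) × Fin n) ⊕ (L × P.V)
  let f : L → P.V → W := fun l v =>
    if h : P.π v ∈ τ then
      Sum.inl (fun j => (l.idxFun j).elim v fun e => vt e ⟨P.π v, h⟩, P.π v)
    else Sum.inr (l, v)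
  have f_pos : ∀ l v (h : P.π v ∈ τ),
      f l v = Sum.inl (fun j => (l.idxFun j).elim v fun e => vt e ⟨P.π v, h⟩, P.π v) :=
    fun l v h => dif_pos h
  have f_neg : ∀ l v, P.π v ∉ τ → f l v = Sum.inr (l, v) := fun l v h => dif_neg h
  have hf : ∀ l l' u u', f l u = f l' u' → (P.π u ∉ τ ∧ l = l' ∧ u = u') ∨
      ∃ (h : P.π u ∈ τ) (h' : P.π u' ∈ τ), ∀ j,
        ((l.idxFun j).elim u fun e => vt e ⟨P.π u, h⟩) =
          (l'.idxFun j).elim u' fun e => vt e ⟨P.π u', h'⟩ := by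
    intro l l' u u' h
    by_cases hu : P.π u ∈ τ <;> by_cases hu' : P.π u' ∈ τ
    · rw [f_pos l u hu, f_pos l' u' hu'] at h
      have h := (Prod.mk.inj (Sum.inl.inj h)).1
      exact .inr ⟨hu, hu', fun j => congrFun h j⟩
    · rw [f_pos l u hu, f_neg l' u' hu'] at h
      cases h
    · rw [f_neg l u hu, f_pos l' u' hu'] at h
      cases h
    · rw [f_neg l u hu, f_neg l' u' hu'] at h
      exact .inl ⟨hu, Prod.mk.inj (Sum.inr.inj h)⟩
  have finj : ∀ l, Function.Injective (f l) := by
    intro l u v huv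
    rcases hf l l u v huv with ⟨-, -, h⟩ | ⟨h, h', hj⟩
    · exact h
    · obtain ⟨j, hl⟩ := l.proper
      simpa [hl] using hj j
  refine P.amalgamate ht hτ (fun l => ⟨f l, finj l⟩)
    (Sum.elim (fun p => p.2) fun p => P.π p.2) ?_ ?_ ?_ ?_
  · intro l v
    show Sum.elim _ _ (f l v) = _
    by_cases h : P.π v ∈ τ
    · rw [f_pos l v h]; rfl
    · rw [f_neg l v h]; rfl
  · intro l l' v v' h hv
    rcases hf l l' v v' h with ⟨-, h, -⟩ | ⟨h, -⟩
    exacts [h, absurd h hv]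
  · intro l l' e' he'
    by_cases hll : l = l'
    · subst hll
      exact ⟨e', he', fun u hu => (Finset.mem_map' _).1 hu⟩
    · -- an active coordinate of `l` reads off an edge containing all the vertices in question
      obtain ⟨j, hl⟩ := l.proper
      cases hl' : l'.idxFun j with
      | none =>
        refine ⟨e', he', fun u hu => ?_⟩
        obtain ⟨u', hu', h⟩ := Finset.mem_map.1 hu
        rcases hf l l' u u' h.symm with ⟨-, h, -⟩ | ⟨h, h', hj⟩
        · exact absurd h hll
        · have := hj j
          simp only [hl, hl', Option.elim] at this
          rwa [this]
      | some e =>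
        refine ⟨e.1, e.2.1, fun u hu => ?_⟩
        obtain ⟨u', hu', h⟩ := Finset.mem_map.1 hu
        rcases hf l l' u u' h.symm with ⟨-, h, -⟩ | ⟨h, h', hj⟩
        · exact absurd h hll
        · have := hj j
          simp only [hl, hl', Option.elim] at this
          rw [this]
          exact hvt₁ _ _
  · intro c
    obtain ⟨l, x, hx⟩ := hHJ fun y => c (Finset.univ.image fun i : {i // i ∈ τ} =>
      (Sum.inl (fun j => vt (y j) i, i.1) : W))
    refine ⟨l, x, fun e he heτ => ?_⟩
    rw [← hx ⟨e, he, heτ⟩]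
    congr 1
    have hmem : ∀ v ∈ e, P.π v ∈ τ := fun v hv => heτ ▸ Finset.mem_image_of_mem _ hv
    have hfe : ∀ v (hv : v ∈ e), f l v =
        Sum.inl (fun j => vt (l ⟨e, he, heτ⟩ j) ⟨P.π v, hmem v hv⟩, P.π v) := by
      intro v hv
      rw [f_pos l v (hmem v hv)]
      congr 2
      funext j
      cases hl : l.idxFun j with
      | none =>
        rw [l.apply_none _ _ hl]
        exact P.inj e he hv (hvt₁ _ _) (hvt₂ ⟨e, he, heτ⟩ ⟨P.π v, hmem v hv⟩).symm
      | some e' => rw [Combinatorics.Line.apply_some hl]; rfl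
    ext w
    constructor
    · intro hw
      obtain ⟨v, hv, rfl⟩ := Finset.mem_map.1 hw
      exact Finset.mem_image.2 ⟨⟨P.π v, hmem v hv⟩, Finset.mem_univ _, (hfe v hv).symm⟩
    · intro hw
      obtain ⟨⟨i, hi⟩, -, rfl⟩ := Finset.mem_image.1 hw
      obtain ⟨v, hv, rfl⟩ := Finset.mem_image.1 (heτ ▸ hi : i ∈ e.image P.π)
      exact Finset.mem_map.2 ⟨v, hv, hfe v hv⟩

theorem Sys.exists_all {k t : ℕ} (ht : 4 ≤ t) (hk : 0 < k) (n : ℕ) :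
    Nonempty (Sys k t n (Finset.univ.powersetCard 3)) := by
  classical
  have key : ∀ σ : Finset (Finset (Fin n)), (∀ τ ∈ σ, τ.card = 3) → Nonempty (Sys k t n σ) := by
    intro σ
    induction σ using Finset.induction_on with
    | empty => exact fun _ => Sys.base ht hk
    | insert τ σ _ ih =>
      intro h
      obtain ⟨P⟩ := ih fun τ' hτ' => h τ' (Finset.mem_insert_of_mem hτ')
      exact P.step ht (h τ (Finset.mem_insert_self _ _))
  exact key _ fun τ hτ => (Finset.mem_powersetCard.1 hτ).2

/-- A Ramsey number turns the partite construction into a 3-graph without good colorings. -/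
theorem hasPos_of_ramsey {k t n : ℕ} (ht : 4 ≤ t) (hk : 2 ≤ k)
    (hn : ∀ χ : Finset (Fin n) → Fin k, ∃ S : Finset (Fin n), S.card = t ∧
      ∃ x, ∀ τ ⊆ S, τ.card = 3 → χ τ = x) : HasPos k t := by
  classical
  obtain ⟨P⟩ := Sys.exists_all (k := k) ht (by omega) n
  have := P.fin
  refine hasPos_of_not_good ht hk P.card3 (fun c hc => ?_) P.sep
  obtain ⟨χ, hχ⟩ := P.ramsey c
  obtain ⟨S, hS, x, hx⟩ := hn χ
  obtain ⟨Q, hQ, rfl, hQc⟩ := hχ S hS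
  refine hc Q hQ ⟨x, fun e he h3 => ?_⟩
  have hcard : (e.image P.π).card = 3 := by
    rw [Finset.card_image_of_injOn (P.inj e (hQ.2 e he h3)), h3]
  rw [hQc e he h3 (Finset.mem_powersetCard.2 ⟨Finset.subset_univ _, hcard⟩)]
  exact hx _ (Finset.image_subset_image he) hcard

/-! ### Ramsey's theorem for triples -/

/-- The finite Ramsey theorem for triples, by passing to the limit along a nonprincipal
ultrafilter: the color `d 0 e` of a triple `e` is the limit color, and `d (s + 1) e` is the limit
of `d s (insert l e)` as `l → ∞`. A set on which all these agree is built greedily. -/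
theorem exists_ramsey (k t : ℕ) : ∃ n : ℕ, ∀ χ : Finset (Fin n) → Fin k,
    ∃ S : Finset (Fin n), S.card = t ∧ ∃ x, ∀ τ ⊆ S, τ.card = 3 → χ τ = x := by
  classical
  by_contra! hno
  choose χ hχ using hno
  let F : Ultrafilter ℕ := Filter.hyperfilter ℕ
  have hF : ∀ m, ∀ᶠ n in (F : Filter ℕ), m < n := fun m =>
    Nat.hyperfilter_le_atTop (Filter.eventually_gt_atTop m)
  have hlim : ∀ f : ℕ → Fin k, ∃ x, ∀ᶠ n in (F : Filter ℕ), f n = x := by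
    intro f
    obtain ⟨x, hx⟩ := (F.map f).eq_pure_of_finite
    refine ⟨x, ?_⟩
    have : {x} ∈ F.map f := by rw [hx]; exact rfl
    exact this
  choose lim hlim using hlim
  let c : ℕ → Finset ℕ → Fin k := fun n e => χ n (Finset.univ.filter fun i => i.1 ∈ e)
  let d : ℕ → Finset ℕ → Fin k := fun s =>
    (fun d e => lim fun l => d (insert l e))^[s] fun e => lim fun n => c n e
  have hd : ∀ s e, ∀ᶠ l in (F : Filter ℕ), d s (insert l e) = d (s + 1) e := by
    intro s e
    simp only [d, Function.iterate_succ_apply']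
    exact hlim _
  have key : ∀ m, ∃ S : Finset ℕ, S.card = m ∧
      ∀ s ≤ 3, ∀ e ⊆ S, e.card + s = 3 → d s e = d 3 ∅ := by
    intro m
    induction m with
    | zero =>
      refine ⟨∅, rfl, fun s _ e he hs => ?_⟩
      obtain rfl := Finset.subset_empty.1 he
      obtain rfl : s = 3 := by simpa using hs
      rfl
    | succ m ih =>
      obtain ⟨S, hS, h⟩ := ih
      have h1 : ∀ᶠ p in (F : Filter ℕ), ∀ i ∈ S, i < p :=
        (Filter.eventually_all_finset S).2 fun i _ => hF i
      have h2 : ∀ᶠ p in (F : Filter ℕ), ∀ s ∈ Finset.range 3, ∀ e ∈ S.powerset,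
          d s (insert p e) = d (s + 1) e :=
        (Filter.eventually_all_finset _).2 fun s _ =>
          (Filter.eventually_all_finset _).2 fun e _ => hd s e
      obtain ⟨p, hp1, hp2⟩ := (h1.and h2).exists
      have hpS : p ∉ S := fun hp => lt_irrefl p (hp1 p hp)
      refine ⟨insert p S, by rw [Finset.card_insert_of_notMem hpS, hS], fun s hs e he hc => ?_⟩
      by_cases hpe : p ∈ e
      · have hsub : e.erase p ⊆ S := Finset.subset_insert_iff.1 he
        have hcard := Finset.card_erase_add_one hpe
        have := hp2 s (Finset.mem_range.2 (by omega)) _ (Finset.mem_powerset.2 hsub)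
        rw [Finset.insert_erase hpe] at this
        rw [this]
        exact h (s + 1) (by omega) _ hsub (by omega)
      · exact h s hs e ((Finset.subset_insert_iff_of_notMem hpe).1 he) hc
  obtain ⟨S, hS, h⟩ := key t
  have h1 : ∀ᶠ n in (F : Filter ℕ), ∀ i ∈ S, i < n :=
    (Filter.eventually_all_finset S).2 fun i _ => hF i
  have h2 : ∀ᶠ n in (F : Filter ℕ), ∀ e ∈ S.powerset, c n e = d 0 e :=
    (Filter.eventually_all_finset _).2 fun e _ => hlim _
  obtain ⟨n, hn1, hn2⟩ := (h1.and h2).exists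
  have hmap : (Finset.univ.filter fun i : Fin n => i.1 ∈ S).map Fin.valEmbedding = S := by
    ext i
    simp only [Finset.mem_map, Finset.mem_filter, Finset.mem_univ, true_and]
    exact ⟨fun ⟨j, hj, hji⟩ => hji ▸ hj, fun hi => ⟨⟨i, hn1 i hi⟩, hi, rfl⟩⟩
  obtain ⟨τ, hτ, hc, hne⟩ := hχ n (Finset.univ.filter fun i : Fin n => i.1 ∈ S)
    (by rw [← Finset.card_map Fin.valEmbedding, hmap, hS]) (d 3 ∅)
  have hτS : τ.map Fin.valEmbedding ⊆ S := hmap ▸ Finset.map_subset_map.2 hτ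
  refine hne ?_
  rw [← h 0 (by omega) _ hτS (by simpa using hc), ← hn2 _ (Finset.mem_powerset.2 hτS)]
  refine congrArg (χ n) ?_
  ext i
  simp only [Finset.mem_filter, Finset.mem_univ, true_and, Finset.mem_map]
  exact ⟨fun hi => ⟨i, hi, rfl⟩, fun ⟨j, hj, hji⟩ => Fin.val_injective hji ▸ hj⟩

/-! ### Transfer to the natural numbers -/

/-- The cliques of the image of a 3-graph are the images of its cliques. -/
theorem IsClq.of_map {V W : Type} {t : ℕ} {E : Set (Finset V)} (f : V ↪ W) {Q' : Finset W}
    (ht : 4 ≤ t) (hQ' : IsClq t {x | ∃ e ∈ E, e.map f = x} Q') :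
    ∃ Q, IsClq t E Q ∧ Q' = Q.map f := by
  have hsub : Q' ⊆ (Q'.preimage f f.injective.injOn).map f := by
    intro v hv
    obtain ⟨x, hx, hc, hvx, -⟩ := hQ'.exists_edge ht hv hv
    obtain ⟨e, -, rfl⟩ := hQ'.2 x hx hc
    obtain ⟨v, -, rfl⟩ := Finset.mem_map.1 hvx
    exact Finset.mem_map_of_mem _ (Finset.mem_preimage.2 hv)
  obtain ⟨Q, -, rfl⟩ := Finset.subset_map_iff.1 hsub
  refine ⟨Q, ⟨by simpa using hQ'.1, fun e he hc => ?_⟩, rfl⟩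
  obtain ⟨e', he', h⟩ := hQ'.2 _ (Finset.map_subset_map.2 he) (by simpa using hc)
  rwa [← Finset.map_injective f h]

theorem noMonoK3_iff {k t : ℕ} {E : Finset (Finset ℕ)} {c : Finset ℕ → Fin k} :
    NoMonoK3 k t E c ↔ Good k t (E : Set (Finset ℕ)) c := by
  constructor
  · rintro h Q hQ ⟨x, hx⟩
    exact h ⟨Q, hQ.1, x, fun e he hc => ⟨hQ.2 e he hc, hx e he hc⟩⟩
  · rintro h ⟨Q, hQ, x, hx⟩
    exact h Q ⟨hQ, fun e he hc => (hx e he hc).1⟩ ⟨x, fun e he hc => (hx e he hc).2⟩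

/-- Positive signal sender: for all `t ≥ 4`, `k ≥ 2` there is a 3-uniform hypergraph with
two edges sharing two vertices, admitting a `K_t^{(3)}`-free `k`-coloring, such that in
every `K_t^{(3)}`-free `k`-coloring the two edges get the same color. -/
theorem stmt_4 (t k : ℕ) (ht : 4 ≤ t) (hk : 2 ≤ k) :
    ∃ (E : Finset (Finset ℕ)) (e f : Finset ℕ),
      (∀ g ∈ E, g.card = 3) ∧ e ∈ E ∧ f ∈ E ∧ (e ∩ f).card = 2 ∧
      (∃ c : Finset ℕ → Fin k, NoMonoK3 k t E c) ∧
      (∀ c : Finset ℕ → Fin k, NoMonoK3 k t E c → c e = c f) := by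
  classical
  obtain ⟨n, hn⟩ := exists_ramsey k t
  obtain ⟨_, ⟨G, rfl⟩, ⟨g, c, hc, -⟩, heq⟩ := hasPos_of_ramsey ht hk hn
  have := G.fin
  obtain ⟨N, ⟨ψ⟩⟩ := Finite.exists_equiv_fin G.V
  let φ : G.V ↪ ℕ := ψ.toEmbedding.trans Fin.valEmbedding
  have hfin : {x | ∃ e ∈ G.E, e.map φ = x}.Finite :=
    Set.Finite.image (fun e : Finset G.V => e.map φ) (Set.toFinite G.E)
  have hmem : ∀ {x}, x ∈ hfin.toFinset ↔ ∃ e ∈ G.E, e.map φ = x := hfin.mem_toFinset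
  refine ⟨hfin.toFinset, (tri G.a G.b (G.r 0)).map φ, (tri G.a G.b (G.r 1)).map φ, ?_,
    hmem.2 ⟨_, G.petal 0, rfl⟩, hmem.2 ⟨_, G.petal 1, rfl⟩, ?_,
    ⟨fun x => c (x.preimage φ φ.injective.injOn), ?_⟩, fun d hd => ?_⟩
  · intro x hx
    obtain ⟨e, he, rfl⟩ := hmem.1 hx
    simpa using G.card3 e he
  · rw [← Finset.map_inter, Finset.card_map]
    have hr : G.r 0 ≠ G.r 1 := fun h => by simpa using G.hr h
    have : tri G.a G.b (G.r 0) ∩ tri G.a G.b (G.r 1) = {G.a, G.b} := by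
      ext v
      simp only [Finset.mem_inter, mem_tri, Finset.mem_insert, Finset.mem_singleton]
      constructor
      · rintro ⟨h | h | rfl, h' | h' | h'⟩
        all_goals first | exact .inl h | exact .inr h | exact .inl h' | exact .inr h' | skip
        exact absurd h' hr
      · rintro (h | h)
        exacts [⟨.inl h, .inl h⟩, ⟨.inr (.inl h), .inr (.inl h)⟩]
    rw [this, Finset.card_pair G.hab]
  · rw [noMonoK3_iff, hfin.coe_toFinset]
    rintro Q' hQ' ⟨x, hx⟩
    obtain ⟨Q, hQ, rfl⟩ := hQ'.of_map φ ht
    refine hc Q hQ ⟨x, fun e he h3 => ?_⟩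
    rw [← hx (e.map φ) (Finset.map_subset_map.2 he) (by simpa using h3)]
    congr 1
    ext v
    simp
  · rw [noMonoK3_iff] at hd
    exact heq _ ⟨_, hd.comap φ (fun e he => hmem.2 ⟨e, he, rfl⟩), fun _ => rfl⟩
end
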